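/- arXiv:math/0504481 — 3 statements merged into one kernel-verified Lean document; each statement's English description precedes it below -/
import Mathlib

section
/- For all n ≥ 1, T > 0 and C₁, C₂, M > 0 there exists K > 0 with the following property. Let g = (g^{αβ}) be a C¹ field of symmetric n×n matrices on an open neighborhood of [−T,T] × ℝⁿ with C₁·Id ≤ g(t,x) ≤ C₂·Id and all first-order partial derivatives of the g^{αβ} bounded in absolute value by M; let b⁰, b¹,…,bⁿ, c : [−T,T] × ℝⁿ → ℝ be measurable with absolute value bounded by M; let f : [−T,T] × ℝⁿ → ℝ be continuous with τ ↦ ‖f(τ,·)‖_{L²(ℝⁿ)} integrable on [−T,T]; let v be C² on a neighborhood of [−T,T] × ℝⁿ, vanishing for |x| ≥ R for some R > 0, and satisfying ∂_t²v − Σ ∂_α(g^{αβ}∂_β v) + b⁰∂_t v + Σ b^α∂_α v + c v = f on [−T,T] × ℝⁿ. Then for all s, t ∈ [−T,T]: E(t,v)^{1/2} ≤ e^{K|t−s|}·(E(s,v)^{1/2} + ∫_{min(s,t)}^{max(s,t)} ‖f(τ,·)‖_{L²(ℝⁿ)} dτ). -/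
open MeasureTheory

/-- Time partial derivative `∂_t u` of a function on `ℝ × ℝⁿ`. -/
noncomputable def Dt {n : ℕ} (u : ℝ × (Fin n → ℝ) → ℝ) (p : ℝ × (Fin n → ℝ)) : ℝ :=
  fderiv ℝ u p (1, 0)

/-- Spatial partial derivative `∂_α u` of a function on `ℝ × ℝⁿ`. -/
noncomputable def Dx {n : ℕ} (α : Fin n) (u : ℝ × (Fin n → ℝ) → ℝ)
    (p : ℝ × (Fin n → ℝ)) : ℝ :=
  fderiv ℝ u p (0, Pi.single α 1)

/-- The energy at time `t` of `v` for the time-dependent metric `g`. -/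
noncomputable def energy {n : ℕ} (g : Fin n → Fin n → ℝ × (Fin n → ℝ) → ℝ)
    (v : ℝ × (Fin n → ℝ) → ℝ) (t : ℝ) : ℝ :=
  ∫ x : Fin n → ℝ,
    ((Dt v (t, x)) ^ 2 + (∑ α, ∑ β, g α β (t, x) * Dx α v (t, x) * Dx β v (t, x))
      + (v (t, x)) ^ 2)


/-- `u` vanishes for `‖x‖ > R`. -/
def VanOut {n : ℕ} (R : ℝ) (u : ℝ × (Fin n → ℝ) → ℝ) : Prop :=
  ∀ (t : ℝ) (x : Fin n → ℝ), R < ‖x‖ → u (t, x) = 0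

lemma VanOut.fderiv_eq {n : ℕ} {R : ℝ} {u : ℝ × (Fin n → ℝ) → ℝ} (h : VanOut R u)
    (t : ℝ) (x : Fin n → ℝ) (hx : R < ‖x‖) : fderiv ℝ u (t, x) = 0 := by
  have ho : IsOpen {p : ℝ × (Fin n → ℝ) | R < ‖p.2‖} :=
    isOpen_lt continuous_const (continuous_norm.comp continuous_snd)
  have : u =ᶠ[nhds (t, x)] fun _ => (0 : ℝ) := by
    filter_upwards [ho.mem_nhds (show (t, x) ∈ {p : ℝ × (Fin n → ℝ) | R < ‖p.2‖} from hx)]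
      with p hp
    exact h p.1 p.2 hp
  rw [this.fderiv_eq]
  simp

lemma VanOut.Dt {n : ℕ} {R : ℝ} {u : ℝ × (Fin n → ℝ) → ℝ} (h : VanOut R u) :
    VanOut R (Dt u) := by
  intro t x hx
  simp [_root_.Dt, h.fderiv_eq t x hx]

lemma VanOut.Dx {n : ℕ} {R : ℝ} {u : ℝ × (Fin n → ℝ) → ℝ} (h : VanOut R u) (α : Fin n) :
    VanOut R (Dx α u) := by
  intro t x hx
  simp [_root_.Dx, h.fderiv_eq t x hx]

lemma contDiffOn_Dt {n : ℕ} {U : Set (ℝ × (Fin n → ℝ))} (hU : IsOpen U)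
    {u : ℝ × (Fin n → ℝ) → ℝ} (h : ContDiffOn ℝ 2 u U) : ContDiffOn ℝ 1 (Dt u) U :=
  (h.fderiv_of_isOpen hU (m := 1) (by norm_num)).clm_apply contDiffOn_const

lemma contDiffOn_Dx {n : ℕ} {U : Set (ℝ × (Fin n → ℝ))} (hU : IsOpen U) (α : Fin n)
    {u : ℝ × (Fin n → ℝ) → ℝ} (h : ContDiffOn ℝ 2 u U) : ContDiffOn ℝ 1 (Dx α u) U :=
  (h.fderiv_of_isOpen hU (m := 1) (by norm_num)).clm_apply contDiffOn_const

lemma continuousOn_Dt {n : ℕ} {U : Set (ℝ × (Fin n → ℝ))} (hU : IsOpen U)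
    {u : ℝ × (Fin n → ℝ) → ℝ} (h : ContDiffOn ℝ 1 u U) : ContinuousOn (Dt u) U :=
  (h.continuousOn_fderiv_of_isOpen hU le_rfl).clm_apply continuousOn_const

lemma continuousOn_Dx {n : ℕ} {U : Set (ℝ × (Fin n → ℝ))} (hU : IsOpen U) (α : Fin n)
    {u : ℝ × (Fin n → ℝ) → ℝ} (h : ContDiffOn ℝ 1 u U) : ContinuousOn (Dx α u) U :=
  (h.continuousOn_fderiv_of_isOpen hU le_rfl).clm_apply continuousOn_const

lemma Dt_Dx_comm {n : ℕ} {U : Set (ℝ × (Fin n → ℝ))} (hU : IsOpen U) (α : Fin n)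
    {u : ℝ × (Fin n → ℝ) → ℝ} (h : ContDiffOn ℝ 2 u U) {p : ℝ × (Fin n → ℝ)} (hp : p ∈ U) :
    Dt (Dx α u) p = Dx α (Dt u) p := by
  have h2 : ContDiffAt ℝ 2 u p := h.contDiffAt (hU.mem_nhds hp)
  have hs := h2.isSymmSndFDerivAt (by simp)
  have hd : DifferentiableAt ℝ (fderiv ℝ u) p :=
    ((h.fderiv_of_isOpen hU (m := 1) (by norm_num)).contDiffAt
      (hU.mem_nhds hp)).differentiableAt (by norm_num)
  have key : ∀ w z : ℝ × (Fin n → ℝ), fderiv ℝ (fun q => fderiv ℝ u q w) p z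
      = fderiv ℝ (fderiv ℝ u) p z w := by
    intro w z
    rw [fderiv_clm_apply hd (differentiableAt_const _)]
    simp
  unfold Dt Dx
  rw [key, key]
  exact hs _ _

section slab
variable {n : ℕ} {T R : ℝ} {U : Set (ℝ × (Fin n → ℝ))}

lemma slice_cont (hTU : Set.Icc (-T) T ×ˢ (Set.univ : Set (Fin n → ℝ)) ⊆ U)
    {u : ℝ × (Fin n → ℝ) → ℝ} (h : ContinuousOn u U) {t : ℝ} (ht : t ∈ Set.Icc (-T) T) :
    Continuous (fun x => u (t, x)) := by
  refine continuousOn_univ.1 (h.comp (f := fun x => (t, x)) (by fun_prop) ?_)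
  intro x _
  exact hTU ⟨ht, trivial⟩

lemma slice_supp {u : ℝ × (Fin n → ℝ) → ℝ} (hv : VanOut R u) (t : ℝ) :
    HasCompactSupport (fun x => u (t, x)) := by
  refine HasCompactSupport.intro (isCompact_closedBall (0 : Fin n → ℝ) R) ?_
  intro x hx
  apply hv
  simpa using hx

lemma slice_int (hTU : Set.Icc (-T) T ×ˢ (Set.univ : Set (Fin n → ℝ)) ⊆ U)
    {u : ℝ × (Fin n → ℝ) → ℝ} (h : ContinuousOn u U) (hv : VanOut R u)
    {t : ℝ} (ht : t ∈ Set.Icc (-T) T) :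
    Integrable (fun x => u (t, x)) :=
  (slice_cont hTU h ht).integrable_of_hasCompactSupport (slice_supp hv t)

lemma energy_cont (hTU : Set.Icc (-T) T ×ˢ (Set.univ : Set (Fin n → ℝ)) ⊆ U)
    {u : ℝ × (Fin n → ℝ) → ℝ} (h : ContinuousOn u U) (hv : VanOut R u) :
    ContinuousOn (fun t => ∫ x, u (t, x)) (Set.Icc (-T) T) := by
  refine continuousOn_integral_of_compact_support (f := fun t x => u (t, x))
    (isCompact_closedBall (0 : Fin n → ℝ) R) (h.mono hTU) ?_
  intro t x _ hx
  apply hv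
  simpa using hx

lemma hasDerivAt_slice (hU : IsOpen U) {u : ℝ × (Fin n → ℝ) → ℝ} (h : ContDiffOn ℝ 1 u U)
    {t : ℝ} {x : Fin n → ℝ} (hp : (t, x) ∈ U) :
    HasDerivAt (fun t => u (t, x)) (Dt u (t, x)) t := by
  have h1 : HasFDerivAt u (fderiv ℝ u (t, x)) (t, x) :=
    ((h.contDiffAt (hU.mem_nhds hp)).differentiableAt (by norm_num)).hasFDerivAt
  exact h1.comp_hasDerivAt t ((hasDerivAt_id t).prodMk (hasDerivAt_const t x))

lemma hasFDerivAt_slice (hU : IsOpen U) {u : ℝ × (Fin n → ℝ) → ℝ} (h : ContDiffOn ℝ 1 u U)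
    {t : ℝ} {x : Fin n → ℝ} (hp : (t, x) ∈ U) :
    HasFDerivAt (fun x => u (t, x))
      ((fderiv ℝ u (t, x)).comp (ContinuousLinearMap.inr ℝ ℝ (Fin n → ℝ))) x := by
  have h1 : HasFDerivAt u (fderiv ℝ u (t, x)) (t, x) :=
    ((h.contDiffAt (hU.mem_nhds hp)).differentiableAt (by norm_num)).hasFDerivAt
  exact h1.comp x (hasFDerivAt_prodMk_right t x)

lemma energy_deriv (hU : IsOpen U)
    (hTU : Set.Icc (-T) T ×ˢ (Set.univ : Set (Fin n → ℝ)) ⊆ U)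
    {u : ℝ × (Fin n → ℝ) → ℝ} (h : ContDiffOn ℝ 1 u U) (hv : VanOut R u)
    {t : ℝ} (ht : t ∈ Set.Ioo (-T) T) :
    HasDerivAt (fun t => ∫ x, u (t, x)) (∫ x, Dt u (t, x)) t := by
  have hc := continuousOn_Dt hU h
  have hK : IsCompact (Set.Icc (-T) T ×ˢ Metric.closedBall (0 : Fin n → ℝ) R) :=
    isCompact_Icc.prod (isCompact_closedBall _ _)
  obtain ⟨B, hB⟩ := hK.exists_bound_of_continuousOn
    (hc.mono ((Set.prod_mono le_rfl (Set.subset_univ _)).trans hTU))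
  have ht' := Set.Ioo_subset_Icc_self ht
  refine (hasDerivAt_integral_of_dominated_loc_of_deriv_le (F := fun t x => u (t, x))
    (F' := fun t x => Dt u (t, x)) (s := Set.Ioo (-T) T)
    (bound := (Metric.closedBall (0 : Fin n → ℝ) R).indicator fun _ => B)
    (Ioo_mem_nhds ht.1 ht.2) ?_ (slice_int hTU h.continuousOn hv ht')
    (slice_cont hTU hc ht').aestronglyMeasurable ?_ ?_ ?_).2
  · filter_upwards [Ioo_mem_nhds ht.1 ht.2] with r hr
    exact (slice_cont hTU h.continuousOn (Set.Ioo_subset_Icc_self hr)).aestronglyMeasurable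
  · refine Filter.Eventually.of_forall fun x r hr => ?_
    by_cases hx : x ∈ Metric.closedBall (0 : Fin n → ℝ) R
    · rw [Set.indicator_of_mem hx]
      exact hB (r, x) ⟨Set.Ioo_subset_Icc_self hr, hx⟩
    · rw [Set.indicator_of_notMem hx, hv.Dt r x (by simpa using hx)]
      simp
  · refine (integrable_indicator_iff Metric.isClosed_closedBall.measurableSet).2 ?_
    exact continuousOn_const.integrableOn_compact (isCompact_closedBall _ _)
  · refine Filter.Eventually.of_forall fun x r hr => ?_
    exact hasDerivAt_slice hU h (hTU ⟨Set.Ioo_subset_Icc_self hr, trivial⟩)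

lemma ibp (hU : IsOpen U)
    (hTU : Set.Icc (-T) T ×ˢ (Set.univ : Set (Fin n → ℝ)) ⊆ U)
    {a u : ℝ × (Fin n → ℝ) → ℝ} (ha : ContDiffOn ℝ 1 a U) (hu : ContDiffOn ℝ 1 u U)
    (hva : VanOut R a)
    {t : ℝ} (ht : t ∈ Set.Icc (-T) T) (α : Fin n) :
    ∫ x, (a (t, x) * Dx α u (t, x) + Dx α a (t, x) * u (t, x)) = 0 := by
  have i1 : Integrable (fun x => a (t, x) * Dx α u (t, x)) :=
    slice_int (R := R) (u := fun p => a p * Dx α u p) hTU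
      (ha.continuousOn.mul (continuousOn_Dx hU α hu))
      (fun t x hx => by simp [hva t x hx]) ht
  have i2 : Integrable (fun x => Dx α a (t, x) * u (t, x)) :=
    slice_int (R := R) (u := fun p => Dx α a p * u p) hTU
      ((continuousOn_Dx hU α ha).mul hu.continuousOn)
      (fun t x hx => by simp [hva.Dx α t x hx]) ht
  have i3 : Integrable (fun x => a (t, x) * u (t, x)) :=
    slice_int (R := R) (u := fun p => a p * u p) hTU
      (ha.continuousOn.mul hu.continuousOn)
      (fun t x hx => by simp [hva t x hx]) ht
  rw [integral_add i1 i2]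
  have := integral_bilinear_hasFDerivAt_right_eq_neg_left_of_integrable
    (μ := (volume : Measure (Fin n → ℝ)))
    (f := fun x => a (t, x)) (g := fun x => u (t, x)) (v := Pi.single α 1)
    (f' := fun x => (fderiv ℝ a (t, x)).comp (ContinuousLinearMap.inr ℝ ℝ (Fin n → ℝ)))
    (g' := fun x => (fderiv ℝ u (t, x)).comp (ContinuousLinearMap.inr ℝ ℝ (Fin n → ℝ)))
    (B := ContinuousLinearMap.mul ℝ ℝ) i2 i1 i3
    (fun x _ => hasFDerivAt_slice hU ha (hTU ⟨ht, trivial⟩))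
    (fun x _ => hasFDerivAt_slice hU hu (hTU ⟨ht, trivial⟩))
  have e : ∫ x, a (t, x) * Dx α u (t, x) = - ∫ x, Dx α a (t, x) * u (t, x) := this
  rw [e]; ring

end slab

lemma gronwall_fwd {T K : ℝ} {y y' F : ℝ → ℝ} (hK : 0 ≤ K)
    (hF0 : ∀ t, 0 ≤ F t) (hc : ContinuousOn y (Set.Icc (-T) T))
    (hd : ∀ t ∈ Set.Ioo (-T) T, HasDerivAt y (y' t) t)
    (hb : ∀ t ∈ Set.Ioo (-T) T, |y' t| ≤ K * y t + F t)
    (hF : IntegrableOn F (Set.Icc (-T) T)) {s t : ℝ} (hs : s ∈ Set.Icc (-T) T)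
    (ht : t ∈ Set.Icc (-T) T) (hst : s ≤ t) :
    y t ≤ Real.exp (K * (t - s)) * (y s + ∫ τ in s..t, F τ) := by
  have hsub : Set.Icc s t ⊆ Set.Icc (-T) T := Set.Icc_subset_Icc hs.1 ht.2
  have hsubo : Set.Ioo s t ⊆ Set.Ioo (-T) T := Set.Ioo_subset_Ioo hs.1 ht.2
  have key := intervalIntegral.sub_le_integral_of_hasDeriv_right_of_le
    (g := fun τ => Real.exp (-(K * (τ - s))) * y τ)
    (g' := fun τ => Real.exp (-(K * (τ - s))) * (-(K * 1)) * y τ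
      + Real.exp (-(K * (τ - s))) * y' τ) (φ := F) hst
    (ContinuousOn.mul (by fun_prop) (hc.mono hsub))
    (fun x hx => by
      have h1 : HasDerivAt (fun τ => Real.exp (-(K * (τ - s))))
          (Real.exp (-(K * (x - s))) * (-(K * 1))) x :=
        ((((hasDerivAt_id x).sub_const s).const_mul K).neg).exp
      exact (h1.mul (hd x (hsubo hx))).hasDerivWithinAt)
    (hF.mono_set hsub)
    (fun x hx => by
      have h1 := (abs_le.1 (hb x (hsubo hx))).2
      have h2 : Real.exp (-(K * (x - s))) ≤ 1 := by
        rw [Real.exp_le_one_iff]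
        have := mul_nonneg hK (sub_nonneg.2 hx.1.le)
        linarith
      have h3 := Real.exp_pos (-(K * (x - s)))
      have h4 := hF0 x
      nlinarith [mul_le_mul_of_nonneg_left h1 h3.le, mul_le_mul_of_nonneg_right h2 h4])
  simp only [sub_self, mul_zero, neg_zero, Real.exp_zero, one_mul] at key
  have h5 : y t = Real.exp (K * (t - s)) * (Real.exp (-(K * (t - s))) * y t) := by
    rw [← mul_assoc, ← Real.exp_add]; simp
  rw [h5]
  exact mul_le_mul_of_nonneg_left (by linarith) (Real.exp_pos _).le

lemma gronwall_both {T K : ℝ} {y y' F : ℝ → ℝ} (hK : 0 ≤ K)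
    (hF0 : ∀ t, 0 ≤ F t) (hc : ContinuousOn y (Set.Icc (-T) T))
    (hd : ∀ t ∈ Set.Ioo (-T) T, HasDerivAt y (y' t) t)
    (hb : ∀ t ∈ Set.Ioo (-T) T, |y' t| ≤ K * y t + F t)
    (hF : IntegrableOn F (Set.Icc (-T) T)) {s t : ℝ} (hs : s ∈ Set.Icc (-T) T)
    (ht : t ∈ Set.Icc (-T) T) :
    y t ≤ Real.exp (K * |t - s|) * (y s + ∫ τ in min s t..max s t, F τ) := by
  rcases le_total s t with h | h
  · rw [abs_of_nonneg (sub_nonneg.2 h), min_eq_left h, max_eq_right h]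
    exact gronwall_fwd hK hF0 hc hd hb hF hs ht h
  · rw [abs_of_nonpos (sub_nonpos.2 h), min_eq_right h, max_eq_left h]
    have hneg : ∀ r, r ∈ Set.Icc (-T) T → -r ∈ Set.Icc (-T) T := fun r hr =>
      ⟨by linarith [hr.2], by linarith [hr.1]⟩
    have hnego : ∀ r, r ∈ Set.Ioo (-T) T → -r ∈ Set.Ioo (-T) T := fun r hr =>
      ⟨by linarith [hr.2], by linarith [hr.1]⟩
    have hF' : IntegrableOn (fun τ => F (-τ)) (Set.Icc (-T) T) := by
      have := hF.comp_neg
      simpa using this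
    have := gronwall_fwd (T := T) (K := K) (y := fun τ => y (-τ)) (y' := fun τ => - y' (-τ))
      (F := fun τ => F (-τ)) (s := -s) (t := -t) hK (fun t => hF0 _)
      (hc.comp (by fun_prop) hneg)
      (fun r hr => by
        have := (hd (-r) (hnego r hr)).scomp r (hasDerivAt_neg r)
        simpa [Function.comp_def] using this)
      (fun r hr => by simpa using hb (-r) (hnego r hr)) hF' (hneg s hs) (hneg t ht)
      (by linarith)
    simp only [neg_neg, intervalIntegral.integral_comp_neg] at this
    convert this using 3
    ring

lemma gronwall_sqrt {T K : ℝ} {E E' F : ℝ → ℝ} (hK : 0 ≤ K)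
    (hE0 : ∀ t ∈ Set.Icc (-T) T, 0 ≤ E t)
    (hF0 : ∀ t, 0 ≤ F t) (hc : ContinuousOn E (Set.Icc (-T) T))
    (hd : ∀ t ∈ Set.Ioo (-T) T, HasDerivAt E (E' t) t)
    (hb : ∀ t ∈ Set.Ioo (-T) T, |E' t| ≤ 2 * K * E t + 2 * (Real.sqrt (E t) * F t))
    (hF : IntegrableOn F (Set.Icc (-T) T)) {s t : ℝ} (hs : s ∈ Set.Icc (-T) T)
    (ht : t ∈ Set.Icc (-T) T) :
    Real.sqrt (E t) ≤ Real.exp (K * |t - s|) *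
      (Real.sqrt (E s) + ∫ τ in min s t..max s t, F τ) := by
  have main : ∀ δ : ℝ, 0 < δ → Real.sqrt (E t + δ) ≤ Real.exp (K * |t - s|) *
      (Real.sqrt (E s + δ) + ∫ τ in min s t..max s t, F τ) := by
    intro δ hδ
    refine gronwall_both (y := fun τ => Real.sqrt (E τ + δ))
      (y' := fun τ => E' τ / (2 * Real.sqrt (E τ + δ))) hK hF0 ?_ ?_ ?_ hF hs ht
    · exact (hc.add continuousOn_const).sqrt
    · intro r hr
      have h0 := hE0 r (Set.Ioo_subset_Icc_self hr)
      exact ((hd r hr).add_const δ).sqrt (by positivity)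
    · intro r hr
      have h0 := hE0 r (Set.Ioo_subset_Icc_self hr)
      have hpos : 0 < Real.sqrt (E r + δ) := Real.sqrt_pos.2 (by linarith)
      have hle : Real.sqrt (E r) ≤ Real.sqrt (E r + δ) := Real.sqrt_le_sqrt (by linarith)
      have hsq := Real.sq_sqrt (show 0 ≤ E r + δ by linarith)
      rw [abs_div, abs_of_pos (show 0 < 2 * Real.sqrt (E r + δ) by positivity),
        div_le_iff₀ (by positivity)]
      refine (hb r hr).trans ?_
      have h1 := mul_le_mul_of_nonneg_right hle (hF0 r)
      have h2 : K * E r ≤ K * (Real.sqrt (E r + δ)) ^ 2 :=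
        mul_le_mul_of_nonneg_left (by linarith) hK
      nlinarith
  have hl : Filter.Tendsto (fun δ : ℝ => Real.sqrt (E t + δ)) (nhdsWithin 0 (Set.Ioi 0))
      (nhds (Real.sqrt (E t))) := by
    have : Continuous (fun δ : ℝ => Real.sqrt (E t + δ)) := by fun_prop
    have h := (this.tendsto 0).mono_left (nhdsWithin_le_nhds (s := Set.Ioi (0:ℝ)))
    simpa using h
  have hr : Filter.Tendsto (fun δ : ℝ => Real.exp (K * |t - s|) *
      (Real.sqrt (E s + δ) + ∫ τ in min s t..max s t, F τ)) (nhdsWithin 0 (Set.Ioi 0))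
      (nhds (Real.exp (K * |t - s|) *
      (Real.sqrt (E s) + ∫ τ in min s t..max s t, F τ))) := by
    have : Continuous (fun δ : ℝ => Real.exp (K * |t - s|) *
      (Real.sqrt (E s + δ) + ∫ τ in min s t..max s t, F τ)) := by fun_prop
    have h := (this.tendsto 0).mono_left (nhdsWithin_le_nhds (s := Set.Ioi (0:ℝ)))
    simpa using h
  exact le_of_tendsto_of_tendsto hl hr (by
    filter_upwards [self_mem_nhdsWithin] with δ hδ using main δ hδ)

lemma cs_aux {n : ℕ} {a φ : (Fin n → ℝ) → ℝ} (ha : Continuous a) (hφ : Continuous φ)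
    (hsa : HasCompactSupport a) (hsφ : HasCompactSupport φ) :
    ∫ x, |a x| * |φ x| ≤ Real.sqrt (∫ x, a x ^ 2) * (eLpNorm φ 2 volume).toReal := by
  have ma : MemLp a 2 (volume : Measure (Fin n → ℝ)) := ha.memLp_of_hasCompactSupport hsa
  have mφ : MemLp φ 2 (volume : Measure (Fin n → ℝ)) := hφ.memLp_of_hasCompactSupport hsφ
  have hh : (2 : ℝ).HolderConjugate 2 := by
    rw [Real.holderConjugate_iff]; norm_num
  have h := integral_mul_norm_le_Lp_mul_Lq (μ := (volume : Measure (Fin n → ℝ))) hh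
    (f := a) (g := φ) (by simpa using ma) (by simpa using mφ)
  have h2 := mφ.eLpNorm_eq_integral_rpow_norm (by norm_num) (by norm_num)
  rw [h2, ENNReal.toReal_ofReal (by positivity), Real.sqrt_eq_rpow]
  simpa using h

lemma pw_aux {n : ℕ} {C₁ M a w b0 c φ e : ℝ} {ξ b : Fin n → ℝ} {G : Fin n → Fin n → ℝ}
    (hC : 0 < C₁) (hM : 0 < M) (hG : ∀ α β, |G α β| ≤ M) (hb0 : |b0| ≤ M)
    (hb : ∀ α, |b α| ≤ M) (hc : |c| ≤ M)
    (he : a ^ 2 + C₁ * (∑ α, ξ α ^ 2) + w ^ 2 ≤ e) :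
    |(∑ α, ∑ β, G α β * ξ α * ξ β) + 2 * w * a
      + 2 * a * (φ - b0 * a - (∑ α, b α * ξ α) - c * w)|
      ≤ ((1 + 3 * M + n * M) + (M * n + M) / C₁) * e + 2 * (|a| * |φ|) := by
  set S := ∑ α, ξ α ^ 2 with hS
  have hS0 : 0 ≤ S := Finset.sum_nonneg fun α _ => sq_nonneg _
  have h1 : |∑ α, ∑ β, G α β * ξ α * ξ β| ≤ M * n * S := by
    calc |∑ α, ∑ β, G α β * ξ α * ξ β| ≤ ∑ α, ∑ β, |G α β * ξ α * ξ β| :=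
          (Finset.abs_sum_le_sum_abs _ _).trans
            (Finset.sum_le_sum fun α _ => Finset.abs_sum_le_sum_abs _ _)
      _ ≤ ∑ α : Fin n, ∑ β : Fin n, M * ((ξ α ^ 2 + ξ β ^ 2) / 2) := by
          refine Finset.sum_le_sum fun α _ => Finset.sum_le_sum fun β _ => ?_
          rw [abs_mul, abs_mul, mul_assoc]
          refine mul_le_mul (hG α β) ?_ (by positivity) hM.le
          nlinarith [sq_nonneg (|ξ α| - |ξ β|), sq_abs (ξ α), sq_abs (ξ β)]
      _ = M * n * S := by
          simp only [← Finset.mul_sum, ← Finset.sum_div, Finset.sum_add_distrib,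
            Finset.sum_const, Finset.card_univ, Fintype.card_fin, nsmul_eq_mul]
          rw [← hS]; ring
  have h2 : |2 * a * ∑ α, b α * ξ α| ≤ M * (n * a ^ 2 + S) := by
    rw [Finset.mul_sum]
    calc |∑ α, 2 * a * (b α * ξ α)| ≤ ∑ α, |2 * a * (b α * ξ α)| :=
          Finset.abs_sum_le_sum_abs _ _
      _ ≤ ∑ α : Fin n, M * (a ^ 2 + ξ α ^ 2) := by
          refine Finset.sum_le_sum fun α _ => ?_
          rw [show 2 * a * (b α * ξ α) = b α * (2 * a * ξ α) by ring, abs_mul]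
          refine mul_le_mul (hb α) ?_ (by positivity) hM.le
          rw [abs_le]
          constructor <;> nlinarith [sq_nonneg (a - ξ α), sq_nonneg (a + ξ α)]
      _ = M * (n * a ^ 2 + S) := by
          simp only [← Finset.mul_sum, Finset.sum_add_distrib,
            Finset.sum_const, Finset.card_univ, Fintype.card_fin, nsmul_eq_mul]
          rw [← hS]
  have h3 : |2 * w * a| ≤ w ^ 2 + a ^ 2 := by
    rw [abs_le]
    constructor <;> nlinarith [sq_nonneg (a - w), sq_nonneg (a + w)]
  have h4 : |2 * a * (b0 * a)| ≤ 2 * M * a ^ 2 := by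
    rw [show 2 * a * (b0 * a) = b0 * (2 * a ^ 2) by ring, abs_mul,
      abs_of_nonneg (show 0 ≤ 2 * a ^ 2 by positivity)]
    nlinarith [mul_le_mul_of_nonneg_right hb0 (sq_nonneg a)]
  have h5 : |2 * a * (c * w)| ≤ M * (w ^ 2 + a ^ 2) := by
    rw [show 2 * a * (c * w) = c * (2 * w * a) by ring, abs_mul]
    exact mul_le_mul hc h3 (by positivity) hM.le
  have h6 : |2 * a * φ| = 2 * (|a| * |φ|) := by
    rw [abs_mul, abs_mul, abs_two]; ring
  have hn0 : (0:ℝ) ≤ n := Nat.cast_nonneg n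
  have hfin : (1 + 3 * M + n * M) * (a ^ 2 + w ^ 2) + (M * n + M) * S ≤
      ((1 + 3 * M + n * M) + (M * n + M) / C₁) * e := by
    have hA : 0 ≤ 1 + 3 * M + n * M := by positivity
    have hB : 0 ≤ (M * n + M) / C₁ := by positivity
    have e1 : a ^ 2 + w ^ 2 ≤ e := by nlinarith
    have e2 : C₁ * S ≤ e := by nlinarith [sq_nonneg a, sq_nonneg w]
    have e3 : (M * n + M) * S = (M * n + M) / C₁ * (C₁ * S) := by field_simp
    rw [e3, add_mul (1 + 3 * M + n * M)]
    exact add_le_add (mul_le_mul_of_nonneg_left e1 hA) (mul_le_mul_of_nonneg_left e2 hB)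
  refine le_trans ?_ (add_le_add_left hfin _)
  have hx := abs_le.1 h1
  have hy := abs_le.1 h2
  have hz := abs_le.1 h3
  have h4' := abs_le.1 h4
  have h5' := abs_le.1 h5
  have h6' := abs_le.1 h6.le
  have p1 : 0 ≤ n * M * w ^ 2 := by positivity
  have p2 : 0 ≤ M * w ^ 2 := by positivity
  rw [abs_le]
  constructor <;> nlinarith

/-- The energy density. -/
noncomputable def edens {n : ℕ} (g : Fin n → Fin n → ℝ × (Fin n → ℝ) → ℝ)
    (v : ℝ × (Fin n → ℝ) → ℝ) (p : ℝ × (Fin n → ℝ)) : ℝ :=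
  (Dt v p) ^ 2 + (∑ α, ∑ β, g α β p * Dx α v p * Dx β v p) + (v p) ^ 2

section dens
variable {n : ℕ} {T R : ℝ} {U : Set (ℝ × (Fin n → ℝ))}
  {g : Fin n → Fin n → ℝ × (Fin n → ℝ) → ℝ} {v : ℝ × (Fin n → ℝ) → ℝ}

lemma edens_contDiffOn (hU : IsOpen U) (hg : ∀ α β, ContDiffOn ℝ 1 (g α β) U)
    (hv : ContDiffOn ℝ 2 v U) : ContDiffOn ℝ 1 (edens g v) U := by
  unfold edens
  refine (((contDiffOn_Dt hU hv).pow 2).add ?_).add ((hv.of_le (by norm_num)).pow 2)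
  refine ContDiffOn.sum fun α _ => ContDiffOn.sum fun β _ => ?_
  exact ((hg α β).mul (contDiffOn_Dx hU α hv)).mul (contDiffOn_Dx hU β hv)

lemma edens_van (hv : VanOut R v) : VanOut R (edens g v) := by
  intro t x hx
  simp [edens, hv t x hx, hv.Dt t x hx, fun α => hv.Dx α t x hx]

lemma flux_contDiffOn (hU : IsOpen U) (hg : ∀ α β, ContDiffOn ℝ 1 (g α β) U)
    (hv : ContDiffOn ℝ 2 v U) (α : Fin n) :
    ContDiffOn ℝ 1 (fun q => ∑ β, g α β q * Dx β v q) U :=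
  ContDiffOn.sum fun β _ => (hg α β).mul (contDiffOn_Dx hU β hv)

lemma flux_van (hv : VanOut R v) (α : Fin n) :
    VanOut R (fun q => ∑ β, g α β q * Dx β v q) := by
  intro t x hx
  simp [fun α => hv.Dx α t x hx]

lemma Dt_edens (hU : IsOpen U) (hg : ∀ α β, ContDiffOn ℝ 1 (g α β) U)
    (hsym : ∀ α β p, g α β p = g β α p)
    (hv : ContDiffOn ℝ 2 v U) {t : ℝ} {x : Fin n → ℝ} (hp : (t, x) ∈ U) :
    Dt (edens g v) (t, x) = 2 * Dt v (t, x) * Dt (Dt v) (t, x)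
      + (∑ α, ∑ β, Dt (g α β) (t, x) * Dx α v (t, x) * Dx β v (t, x))
      + 2 * (∑ α, Dx α (Dt v) (t, x) * ∑ β, g α β (t, x) * Dx β v (t, x))
      + 2 * v (t, x) * Dt v (t, x) := by
  have h1 := hasDerivAt_slice hU (edens_contDiffOn hU hg hv) hp
  have h2 : HasDerivAt (fun t => edens g v (t, x)) _ t :=
    (((hasDerivAt_slice hU (contDiffOn_Dt hU hv) hp).fun_pow 2).fun_add
      (HasDerivAt.fun_sum (u := Finset.univ) fun α _ =>
        HasDerivAt.fun_sum (u := Finset.univ) fun β _ =>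
          ((hasDerivAt_slice hU (hg α β) hp).fun_mul
            (hasDerivAt_slice hU (contDiffOn_Dx hU α hv) hp)).fun_mul
            (hasDerivAt_slice hU (contDiffOn_Dx hU β hv) hp))).fun_add
      ((hasDerivAt_slice hU (hv.of_le (by norm_num)) hp).fun_pow 2)
  rw [h1.unique h2]
  simp only [Dt_Dx_comm hU _ hv hp]
  have e1 : ∑ α, ∑ β, g α β (t, x) * Dx α v (t, x) * Dx β (Dt v) (t, x)
      = ∑ α, Dx α (Dt v) (t, x) * ∑ β, g α β (t, x) * Dx β v (t, x) := by
    rw [Finset.sum_comm]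
    refine Finset.sum_congr rfl fun α _ => ?_
    rw [Finset.mul_sum]
    refine Finset.sum_congr rfl fun β _ => ?_
    rw [hsym β α]; ring
  have e2 : ∑ α, ∑ β, g α β (t, x) * Dx α (Dt v) (t, x) * Dx β v (t, x)
      = ∑ α, Dx α (Dt v) (t, x) * ∑ β, g α β (t, x) * Dx β v (t, x) := by
    refine Finset.sum_congr rfl fun α _ => ?_
    rw [Finset.mul_sum]
    refine Finset.sum_congr rfl fun β _ => ?_
    ring
  simp only [add_mul, Finset.sum_add_distrib]
  rw [e1, e2]
  norm_num
  ring

lemma integral_Dt_edens (hU : IsOpen U)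
    (hTU : Set.Icc (-T) T ×ˢ (Set.univ : Set (Fin n → ℝ)) ⊆ U)
    (hg : ∀ α β, ContDiffOn ℝ 1 (g α β) U)
    (hv : ContDiffOn ℝ 2 v U) (hR : VanOut R v) {t : ℝ} (ht : t ∈ Set.Icc (-T) T) :
    ∫ x, Dt (edens g v) (t, x) = ∫ x, (Dt (edens g v) (t, x)
      - 2 * ∑ α, (Dt v (t, x) * Dx α (fun q => ∑ β, g α β q * Dx β v q) (t, x)
        + Dx α (Dt v) (t, x) * ∑ β, g α β (t, x) * Dx β v (t, x))) := by
  have hi : ∀ α, Integrable (fun x =>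
      Dt v (t, x) * Dx α (fun q => ∑ β, g α β q * Dx β v q) (t, x)
        + Dx α (Dt v) (t, x) * ∑ β, g α β (t, x) * Dx β v (t, x)) := by
    intro α
    refine slice_int (R := R) (u := fun p =>
      Dt v p * Dx α (fun q => ∑ β, g α β q * Dx β v q) p
        + Dx α (Dt v) p * ∑ β, g α β p * Dx β v p) hTU ?_ ?_ ht
    · exact ((contDiffOn_Dt hU hv).continuousOn.mul
        (continuousOn_Dx hU α (flux_contDiffOn hU hg hv α))).add
        ((continuousOn_Dx hU α (contDiffOn_Dt hU hv)).mul
          (flux_contDiffOn hU hg hv α).continuousOn)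
    · intro t x hx
      simp [hR.Dt t x hx, hR.Dt.Dx α t x hx]
  rw [integral_sub, integral_const_mul, integral_finset_sum _ fun α _ => hi α,
    Finset.sum_eq_zero fun α _ => ibp hU hTU (contDiffOn_Dt hU hv)
      (flux_contDiffOn hU hg hv α) hR.Dt ht α]
  · simp
  · exact slice_int hTU (continuousOn_Dt hU (edens_contDiffOn hU hg hv)) (edens_van hR).Dt ht
  · exact (integrable_finset_sum _ fun α _ => hi α).const_mul 2

end dens

/-- Inhomogeneous energy estimate: for a solution `v` of
`∂_t²v − Σ ∂_α(g^{αβ}∂_β v) + b⁰∂_t v + Σ b^α∂_α v + c v = f`, one has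
`E(t,v)^{1/2} ≤ e^{K|t−s|}(E(s,v)^{1/2} + ∫ ‖f(τ,·)‖_{L²} dτ)` with `K` depending only
on `n, T, C₁, C₂, M`. -/
theorem stmt_6 (n : ℕ) (hn : 1 ≤ n) (T C₁ C₂ M : ℝ)
    (hT : 0 < T) (hC₁ : 0 < C₁) (hC₂ : 0 < C₂) (hM : 0 < M) :
    ∃ K : ℝ, 0 < K ∧
      ∀ (U : Set (ℝ × (Fin n → ℝ))), IsOpen U →
        Set.Icc (-T) T ×ˢ (Set.univ : Set (Fin n → ℝ)) ⊆ U →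
      ∀ g : Fin n → Fin n → ℝ × (Fin n → ℝ) → ℝ,
        (∀ α β, ContDiffOn ℝ 1 (g α β) U) →
        (∀ α β p, g α β p = g β α p) →
        (∀ p ∈ Set.Icc (-T) T ×ˢ (Set.univ : Set (Fin n → ℝ)), ∀ ξ : Fin n → ℝ,
          C₁ * (∑ α, (ξ α) ^ 2) ≤ (∑ α, ∑ β, g α β p * ξ α * ξ β) ∧
          (∑ α, ∑ β, g α β p * ξ α * ξ β) ≤ C₂ * (∑ α, (ξ α) ^ 2)) →
        (∀ α β, ∀ p ∈ Set.Icc (-T) T ×ˢ (Set.univ : Set (Fin n → ℝ)),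
          |Dt (g α β) p| ≤ M ∧ ∀ μ, |Dx μ (g α β) p| ≤ M) →
      ∀ (b0 : ℝ × (Fin n → ℝ) → ℝ) (b : Fin n → ℝ × (Fin n → ℝ) → ℝ)
        (c : ℝ × (Fin n → ℝ) → ℝ),
        Measurable b0 → (∀ α, Measurable (b α)) → Measurable c →
        (∀ p ∈ Set.Icc (-T) T ×ˢ (Set.univ : Set (Fin n → ℝ)),
          |b0 p| ≤ M ∧ (∀ α, |b α p| ≤ M) ∧ |c p| ≤ M) →
      ∀ f : ℝ × (Fin n → ℝ) → ℝ, Continuous f →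
        IntegrableOn (fun τ => (eLpNorm (fun x => f (τ, x)) 2 volume).toReal)
          (Set.Icc (-T) T) →
      ∀ v : ℝ × (Fin n → ℝ) → ℝ, ContDiffOn ℝ 2 v U →
        (∃ R : ℝ, 0 < R ∧ ∀ (t : ℝ) (x : Fin n → ℝ), R ≤ ‖x‖ → v (t, x) = 0) →
        (∀ p ∈ Set.Icc (-T) T ×ˢ (Set.univ : Set (Fin n → ℝ)),
          Dt (Dt v) p - (∑ α, Dx α (fun q => ∑ β, g α β q * Dx β v q) p)
            + b0 p * Dt v p + (∑ α, b α p * Dx α v p) + c p * v p = f p) →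
      ∀ s ∈ Set.Icc (-T) T, ∀ t ∈ Set.Icc (-T) T,
        Real.sqrt (energy g v t)
          ≤ Real.exp (K * |t - s|) *
              (Real.sqrt (energy g v s)
                + ∫ τ in min s t..max s t,
                    (eLpNorm (fun x => f (τ, x)) 2 volume).toReal) := by
  refine ⟨((1 + 3 * M + n * M) + (M * n + M) / C₁) / 2, by positivity, ?_⟩
  intro U hU hTU g hg hsym hell hgb b0 b c _ _ _ hbd f hf hfi v hv hvR hpde s hs t ht
  obtain ⟨R, _, hR0⟩ := hvR
  have hR : VanOut R v := fun t x hx => hR0 t x hx.le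
  have hmem : ∀ {r : ℝ} (_ : r ∈ Set.Icc (-T) T) (x : Fin n → ℝ),
      (r, x) ∈ Set.Icc (-T) T ×ˢ (Set.univ : Set (Fin n → ℝ)) := fun hr x => ⟨hr, trivial⟩
  have hlow : ∀ {r : ℝ} (_ : r ∈ Set.Icc (-T) T) (x : Fin n → ℝ),
      (Dt v (r, x)) ^ 2 + C₁ * (∑ α, (Dx α v (r, x)) ^ 2) + (v (r, x)) ^ 2
        ≤ edens g v (r, x) := by
    intro r hr x
    have := (hell (r, x) (hmem hr x) (fun α => Dx α v (r, x))).1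
    unfold edens
    linarith
  have hsq : ∀ {r : ℝ} (_ : r ∈ Set.Icc (-T) T) (x : Fin n → ℝ),
      (Dt v (r, x)) ^ 2 ≤ edens g v (r, x) := by
    intro r hr x
    have h1 := hlow hr x
    have h2 : 0 ≤ C₁ * (∑ α, (Dx α v (r, x)) ^ 2) :=
      mul_nonneg hC₁.le (Finset.sum_nonneg fun α _ => sq_nonneg _)
    nlinarith [sq_nonneg (v (r, x))]
  have heC := edens_contDiffOn hU hg hv
  have heV : VanOut R (edens g v) := edens_van hR
  have hvt := contDiffOn_Dt hU hv
  refine gronwall_sqrt (E := energy g v) (E' := fun r => ∫ x, Dt (edens g v) (r, x))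
    (F := fun τ => (eLpNorm (fun x => f (τ, x)) 2 volume).toReal) (T := T)
    (by positivity) ?_ (fun _ => ENNReal.toReal_nonneg) (energy_cont hTU heC.continuousOn heV)
    (fun r hr => energy_deriv hU hTU heC heV hr) ?_ hfi hs ht
  · intro r hr
    exact integral_nonneg fun x => (sq_nonneg _).trans (hsq hr x)
  · intro r hr'
    have hr := Set.Ioo_subset_Icc_self hr'
    have hE : energy g v r = ∫ x, edens g v (r, x) := rfl
    have hfc : Continuous (fun x => f (r, x)) := by fun_prop
    have hfs : HasCompactSupport (fun x => f (r, x)) := by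
      refine HasCompactSupport.intro (isCompact_closedBall (0 : Fin n → ℝ) R) ?_
      intro x hx
      have hx' : R < ‖x‖ := by simpa using hx
      rw [← hpde (r, x) (hmem hr x)]
      simp [hR r x hx', hR.Dt r x hx', hR.Dt.Dt r x hx', fun α => hR.Dx α r x hx',
        fun α => (flux_van (g := g) hR α).Dx α r x hx']
    have hac := slice_cont hTU hvt.continuousOn hr
    have has := slice_supp hR.Dt r
    have hei := slice_int hTU heC.continuousOn heV hr
    have hai : Integrable (fun x => |Dt v (r, x)| * |f (r, x)|) := by
      refine (hac.abs.mul hfc.abs).integrable_of_hasCompactSupport ?_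
      have : HasCompactSupport (fun x => |Dt v (r, x)|) := has.comp_left abs_zero
      exact this.mul_right
    have h2i : Integrable (fun x => Dt v (r, x) ^ 2) :=
      slice_int (R := R) (u := fun p => Dt v p ^ 2) hTU (hvt.continuousOn.pow 2)
        (fun t x hx => by simp [hR.Dt t x hx]) hr
    have hcs := cs_aux hac hfc has hfs
    have hle : Real.sqrt (∫ x, Dt v (r, x) ^ 2) ≤ Real.sqrt (energy g v r) :=
      Real.sqrt_le_sqrt (integral_mono h2i hei fun x => hsq hr x)
    have hcs' := hcs.trans (mul_le_mul_of_nonneg_right hle ENNReal.toReal_nonneg)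
    rw [integral_Dt_edens hU hTU hg hv hR hr, ← Real.norm_eq_abs]
    have hbound : ‖∫ x, (Dt (edens g v) (r, x)
      - 2 * ∑ α, (Dt v (r, x) * Dx α (fun q => ∑ β, g α β q * Dx β v q) (r, x)
        + Dx α (Dt v) (r, x) * ∑ β, g α β (r, x) * Dx β v (r, x)))‖
        ≤ ∫ x, (((1 + 3 * M + n * M) + (M * n + M) / C₁) * edens g v (r, x)
          + 2 * (|Dt v (r, x)| * |f (r, x)|)) := by
      refine norm_integral_le_of_norm_le ((hei.const_mul _).add (hai.const_mul 2))
        (Filter.Eventually.of_forall fun x => ?_)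
      have hb := hbd (r, x) (hmem hr x)
      have hpw := pw_aux (φ := f (r, x)) hC₁ hM
        (fun α β => (hgb α β (r, x) (hmem hr x)).1) hb.1 hb.2.1 hb.2.2 (hlow hr x)
      rw [Real.norm_eq_abs]
      convert hpw using 2
      rw [Dt_edens hU hg hsym hv (hTU (hmem hr x)), ← hpde (r, x) (hmem hr x),
        Finset.sum_add_distrib, ← Finset.mul_sum]
      ring
    refine hbound.trans ?_
    rw [integral_add (hei.const_mul _) (hai.const_mul 2), integral_const_mul,
      integral_const_mul, ← hE]
    have : 2 * (((1 + 3 * M + n * M) + (M * n + M) / C₁) / 2) * energy g v r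
      = ((1 + 3 * M + n * M) + (M * n + M) / C₁) * energy g v r := by ring
    rw [this]
    linarith
end

section
/- Let n ≥ 1, T ∈ ℝ, let φ : ℝⁿ → ℝ be Lipschitz with φ(x) > −T for every x, and let H = (H¹,…,Hⁿ) : ℝ^{1+n} → ℝⁿ be C¹ with compact support. Then ∫_{ℝⁿ} (∫_{−T}^{φ(x)} Σ_{α=1}^n ∂_α H^α(t,x) dt) dx = − ∫_{ℝⁿ} Σ_{α=1}^n ∂_α φ(x) · H^α(φ(x), x) dx, where ∂_αφ denotes the almost-everywhere defined partial derivatives of the Lipschitz function φ (Rademacher's theorem). -/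
open MeasureTheory

section Aux

variable {E : Type*} [NormedAddCommGroup E] [NormedSpace ℝ E]

lemma aux_hasLineDerivAt (T : ℝ) (φ : E → ℝ) (K : NNReal) (hφ : LipschitzWith K φ)
    (h : ℝ × E → ℝ) (hh : ContDiff ℝ 1 h) (L : NNReal) (hL : LipschitzWith L h) (x v : E)
    (hx : DifferentiableAt ℝ φ x) :
    HasLineDerivAt ℝ (fun y => ∫ t in (-T)..(φ y), h (t, y))
      (fderiv ℝ φ x v * h (φ x, x) + ∫ t in (-T)..(φ x), fderiv ℝ h (t, x) (0, v)) x v := by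
  have hc : Continuous h := hh.continuous
  have hd : Differentiable ℝ h := hh.differentiable (by simp)
  have hcf : Continuous (fderiv ℝ h) := hh.continuous_fderiv (by simp)
  have hint : ∀ (y : E) (a b : ℝ), IntervalIntegrable (fun t => h (t, y)) volume a b :=
    fun y a b => Continuous.intervalIntegrable (by fun_prop) a b
  have hA : HasDerivAt (fun τ : ℝ => ∫ t in (-T)..(φ x), h (t, x + τ • v))
      (∫ t in (-T)..(φ x), fderiv ℝ h (t, x) (0, v)) 0 := by
    have := (intervalIntegral.hasDerivAt_integral_of_dominated_loc_of_deriv_le (μ := volume)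
      (F := fun (τ : ℝ) t => h (t, x + τ • v))
      (F' := fun (τ : ℝ) t => fderiv ℝ h (t, x + τ • v) (0, v)) (x₀ := (0:ℝ))
      (a := -T) (b := φ x) (bound := fun _ => L * ‖v‖) (s := Set.univ) Filter.univ_mem
      (Filter.Eventually.of_forall fun τ =>
        (Continuous.aestronglyMeasurable (by fun_prop)))
      (Continuous.intervalIntegrable (by fun_prop) _ _)
      (Continuous.aestronglyMeasurable (by fun_prop))
      (Filter.Eventually.of_forall fun t _ τ _ => ?_)
      (by simp)
      (Filter.Eventually.of_forall fun t _ τ _ => ?_)).2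
    · simpa using this
    · refine (ContinuousLinearMap.le_opNorm _ _).trans ?_
      have h1 : ‖((0:ℝ), v)‖ = ‖v‖ := by simp [Prod.norm_def]
      rw [h1]
      gcongr
      exact norm_fderiv_le_of_lipschitz ℝ hL
    · have h1 : HasDerivAt (fun τ : ℝ => (t, x + τ • v)) ((0:ℝ), v) τ := by
        have h2 : HasDerivAt (fun τ : ℝ => x + τ • v) v τ := by
          simpa using ((hasDerivAt_id τ).smul_const v).const_add x
        exact (hasDerivAt_const τ t).prodMk h2
      exact (hd (t, x + τ • v)).hasFDerivAt.comp_hasDerivAt τ h1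
  have hφd : HasDerivAt (fun τ : ℝ => φ (x + τ • v)) (fderiv ℝ φ x v) 0 :=
    hx.hasFDerivAt.hasLineDerivAt v
  have hB : HasDerivAt (fun τ : ℝ => ∫ t in (φ x)..(φ (x + τ • v)), h (t, x))
      (fderiv ℝ φ x v * h (φ x, x)) 0 := by
    have hcx : Continuous fun t => h (t, x) := by fun_prop
    have h1 : HasDerivAt (fun u : ℝ => ∫ t in (φ x)..u, h (t, x)) (h (φ x, x))
        (φ (x + (0:ℝ) • v)) := by
      have := intervalIntegral.integral_hasDerivAt_right (hint x (φ x) (φ x))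
        (hcx.stronglyMeasurableAtFilter _ _) hcx.continuousAt
      simpa using this
    have := h1.comp (0:ℝ) hφd
    rw [mul_comm]
    exact this
  have hC : HasDerivAt
      (fun τ : ℝ => ∫ t in (φ x)..(φ (x + τ • v)), (h (t, x + τ • v) - h (t, x))) 0 0 := by
    rw [hasDerivAt_iff_hasFDerivAt]
    have : (ContinuousLinearMap.toSpanSingleton ℝ (0:ℝ)) = 0 := by simp
    rw [this]
    refine Asymptotics.IsBigO.hasFDerivAt (n := 2) ?_ (by norm_num)
    refine Asymptotics.IsBigO.of_bound (L * ‖v‖ * (K * ‖v‖)) (Filter.Eventually.of_forall ?_)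
    intro τ
    have e1 : ∀ t, ‖h (t, x + τ • v) - h (t, x)‖ ≤ L * (|τ| * ‖v‖) := by
      intro t
      have := hL.norm_sub_le (t, x + τ • v) (t, x)
      have h0 : 0 ≤ |τ| * ‖v‖ := by positivity
      simpa [Prod.norm_def, norm_smul, max_eq_right h0] using this
    have e2 : |φ (x + τ • v) - φ x| ≤ K * (|τ| * ‖v‖) := by
      have := hφ.norm_sub_le (x + τ • v) x
      simpa [norm_smul] using this
    have e3 := intervalIntegral.norm_integral_le_of_norm_le_const
      (a := φ x) (b := φ (x + τ • v)) (fun t _ => e1 t)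
    refine e3.trans ?_
    calc _ ≤ L * (|τ| * ‖v‖) * (K * (|τ| * ‖v‖)) := by gcongr
      _ = _ := by
        simp only [sub_zero, norm_pow, Real.norm_eq_abs, abs_abs]
        ring
  have := (hA.add hB).add hC
  unfold HasLineDerivAt
  convert this using 1
  · funext τ
    simp only [Pi.add_apply]
    rw [intervalIntegral.integral_sub (hint _ _ _) (hint _ _ _)]
    rw [← intervalIntegral.integral_add_adjacent_intervals (hint _ (-T) (φ x)) (hint _ _ _)]
    ring
  · ring

lemma aux_lipschitz (T : ℝ) (φ : E → ℝ) (K : NNReal) (hφ : LipschitzWith K φ)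
    (h : ℝ × E → ℝ) (hc : Continuous h) (L : NNReal) (hL : LipschitzWith L h)
    (hs : HasCompactSupport h) :
    ∃ D, LipschitzWith D (fun y => ∫ t in (-T)..(φ y), h (t, y)) := by
  obtain ⟨M, hM⟩ := hs.exists_bound_of_continuous hc
  obtain ⟨R, hR⟩ := (hs.isCompact.image continuous_fst).isBounded.subset_closedBall 0
  have hint : ∀ (y : E) (a b : ℝ), IntervalIntegrable (fun t => h (t, y)) volume a b :=
    fun y a b => Continuous.intervalIntegrable (by fun_prop) a b
  have hz : ∀ t y, t ∉ Metric.closedBall (0:ℝ) R → h (t, y) = 0 := by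
    intro t y ht
    by_contra hne
    exact ht (hR ⟨(t, y), subset_tsupport _ hne, rfl⟩)
  refine ⟨(M * K + L * volume.real (Metric.closedBall (0:ℝ) R)).toNNReal,
    LipschitzWith.of_dist_le' fun x y => ?_⟩
  have hsplit : (∫ t in (-T)..(φ x), h (t, x)) - (∫ t in (-T)..(φ y), h (t, y))
      = (∫ t in (φ y)..(φ x), h (t, x)) + ∫ t in (-T)..(φ y), (h (t, x) - h (t, y)) := by
    rw [intervalIntegral.integral_sub (hint _ _ _) (hint _ _ _),
      ← intervalIntegral.integral_add_adjacent_intervals (hint x (-T) (φ y)) (hint x _ _)]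
    ring
  have hM0 : 0 ≤ M := (norm_nonneg _).trans (hM (0, x))
  rw [dist_eq_norm, hsplit, add_mul]
  refine (norm_add_le _ _).trans (add_le_add ?_ ?_)
  · have e := intervalIntegral.norm_integral_le_of_norm_le_const
      (a := φ y) (b := φ x) (fun t _ => hM (t, x))
    refine e.trans ?_
    have := hφ.dist_le_mul x y
    rw [Real.dist_eq] at this
    rw [mul_assoc]
    gcongr
  · rw [intervalIntegral.norm_intervalIntegral_eq]
    have e1 : ∀ t, ‖h (t, x) - h (t, y)‖ ≤ L * dist x y := by
      intro t
      have := hL.norm_sub_le (t, x) (t, y)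
      simpa [Prod.norm_def, dist_eq_norm] using this
    rw [setIntegral_eq_of_subset_of_forall_sdiff_eq_zero
      (f := fun t => h (t, x) - h (t, y)) (s := Set.uIoc (-T) (φ y) ∩ Metric.closedBall (0:ℝ) R) measurableSet_uIoc Set.inter_subset_left
      (fun t ht => by
        have : t ∉ Metric.closedBall (0:ℝ) R := fun h' => ht.2 ⟨ht.1, h'⟩
        simp only [hz t x this, hz t y this, sub_zero])]
    have hfin : volume (Metric.closedBall (0:ℝ) R) < ⊤ := measure_closedBall_lt_top
    refine (norm_setIntegral_le_of_norm_le_const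
      ((measure_mono Set.inter_subset_right).trans_lt hfin) (fun t _ => e1 t)).trans ?_
    have : volume.real (Set.uIoc (-T) (φ y) ∩ Metric.closedBall (0:ℝ) R)
        ≤ volume.real (Metric.closedBall (0:ℝ) R) :=
      measureReal_mono Set.inter_subset_right hfin.ne
    calc _ ≤ L * dist x y * volume.real (Metric.closedBall (0:ℝ) R) := by gcongr
      _ = _ := by ring

lemma aux_main [MeasurableSpace E] [BorelSpace E] [FiniteDimensional ℝ E] (μ : Measure E)
    [μ.IsAddHaarMeasure] (T : ℝ) (φ : E → ℝ) (K : NNReal) (hφ : LipschitzWith K φ)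
    (h : ℝ × E → ℝ) (hh : ContDiff ℝ 1 h) (hs : HasCompactSupport h) (v : E) :
    Integrable (fun x => ∫ t in (-T)..(φ x), fderiv ℝ h (t, x) (0, v)) μ ∧
    Integrable (fun x => fderiv ℝ φ x v * h (φ x, x)) μ ∧
    ∫ x, (∫ t in (-T)..(φ x), fderiv ℝ h (t, x) (0, v)) ∂μ
      = - ∫ x, fderiv ℝ φ x v * h (φ x, x) ∂μ := by
  have hc : Continuous h := hh.continuous
  have hφc : Continuous φ := hφ.continuous
  have hcf : Continuous (fderiv ℝ h) := hh.continuous_fderiv (by simp)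
  obtain ⟨L, hL⟩ := ContDiff.lipschitzWith_of_hasCompactSupport hs hh (by simp)
  obtain ⟨D, hD⟩ := aux_lipschitz T φ K hφ h hc L hL hs
  have hcomp : IsCompact (Prod.snd '' tsupport h) := hs.isCompact.image continuous_snd
  have hz : ∀ x, x ∉ Prod.snd '' tsupport h → ∀ t, (t, x) ∉ tsupport h :=
    fun x hx t ht => hx ⟨(t, x), ht, rfl⟩
  have hI1 : Integrable (fun x => ∫ t in (-T)..(φ x), fderiv ℝ h (t, x) (0, v)) μ := by
    refine Continuous.integrable_of_hasCompactSupport ?_ ?_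
    · exact intervalIntegral.continuous_parametric_intervalIntegral_of_continuous
        (f := fun x t => fderiv ℝ h (t, x) (0, v))
        (by simp only [Function.uncurry_def]; fun_prop) hφc
    · refine HasCompactSupport.intro hcomp fun x hx => ?_
      have : ∀ t, fderiv ℝ h (t, x) = 0 := fun t =>
        image_eq_zero_of_notMem_tsupport fun h' => hz x hx t (tsupport_fderiv_subset ℝ h')
      simp [this]
  have hI2 : Integrable (fun x => fderiv ℝ φ x v * h (φ x, x)) μ := by
    have hi : Integrable (fun x => h (φ x, x)) μ := by
      refine Continuous.integrable_of_hasCompactSupport (by fun_prop) ?_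
      exact HasCompactSupport.intro hcomp fun x hx =>
        image_eq_zero_of_notMem_tsupport (hz x hx _)
    refine hi.bdd_mul (c := K * ‖v‖) (measurable_fderiv_apply_const ℝ φ v).aestronglyMeasurable
      (Filter.Eventually.of_forall fun x => ?_)
    refine (ContinuousLinearMap.le_opNorm _ _).trans ?_
    gcongr
    exact norm_fderiv_le_of_lipschitz ℝ hφ
  refine ⟨hI1, hI2, ?_⟩
  have hgs : HasCompactSupport (fun y => ∫ t in (-T)..(φ y), h (t, y)) := by
    refine HasCompactSupport.intro hcomp fun x hx => ?_
    have : ∀ t, h (t, x) = 0 := fun t => image_eq_zero_of_notMem_tsupport (hz x hx t)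
    simp [this]
  have key := LipschitzWith.integral_lineDeriv_mul_eq (μ := μ)
    (LipschitzWith.const (α := E) (1:ℝ)) hD hgs (-v)
  have hzero : ∀ x : E, lineDeriv ℝ (fun _ : E => (1:ℝ)) x (-v) = 0 := fun x => by
    simp [lineDeriv]
  simp only [hzero, zero_mul, integral_zero, neg_neg, mul_one] at key
  have hae : (fun x => lineDeriv ℝ (fun y => ∫ t in (-T)..(φ y), h (t, y)) x v) =ᵐ[μ]
      fun x => fderiv ℝ φ x v * h (φ x, x) + ∫ t in (-T)..(φ x), fderiv ℝ h (t, x) (0, v) := by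
    filter_upwards [hφ.ae_differentiableAt (μ := μ)] with x hx
    exact (aux_hasLineDerivAt T φ K hφ h hh L hL x v hx).lineDeriv
  rw [integral_congr_ae hae, integral_add hI2 hI1] at key
  linarith

end Aux

/-- Gauss–Green formula on the subgraph of a Lipschitz function: for
`φ : ℝⁿ → ℝ` Lipschitz with `φ > −T` and `H : ℝ^{1+n} → ℝⁿ` a `C¹` compactly supported
vector field,
`∫_{ℝⁿ} ∫_{−T}^{φ(x)} Σ_α ∂_α H^α(t,x) dt dx = − ∫_{ℝⁿ} Σ_α ∂_αφ(x)·H^α(φ(x),x) dx`,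
where `∂_αφ` is the a.e. defined gradient of `φ` (Rademacher). -/
theorem stmt_7 (n : ℕ) (hn : 1 ≤ n) (T : ℝ)
    (φ : (Fin n → ℝ) → ℝ) (hφ : ∃ K : NNReal, LipschitzWith K φ)
    (hφT : ∀ x, -T < φ x)
    (H : ℝ × (Fin n → ℝ) → (Fin n → ℝ)) (hH : ContDiff ℝ 1 H)
    (hHc : HasCompactSupport H) :
    (∫ x : Fin n → ℝ, ∫ t in (-T)..(φ x),
        ∑ α, fderiv ℝ (fun p => H p α) (t, x) (0, Pi.single α 1))
      = - ∫ x : Fin n → ℝ,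
          ∑ α, fderiv ℝ φ x (Pi.single α 1) * H (φ x, x) α := by
  obtain ⟨K, hK⟩ := hφ
  have hα : ∀ α, ContDiff ℝ 1 (fun p => H p α) := fun α => contDiff_pi.1 hH α
  have hsα : ∀ α, HasCompactSupport (fun p => H p α) := fun α =>
    hHc.comp_left (g := fun w : Fin n → ℝ => w α) rfl
  have main := fun α => aux_main volume T φ K hK (fun p => H p α) (hα α) (hsα α)
    (Pi.single α 1)
  have hsum : ∀ x : Fin n → ℝ, (∫ t in (-T)..(φ x),
        ∑ α, fderiv ℝ (fun p => H p α) (t, x) (0, Pi.single α 1))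
      = ∑ α, ∫ t in (-T)..(φ x), fderiv ℝ (fun p => H p α) (t, x) (0, Pi.single α 1) := by
    intro x
    refine intervalIntegral.integral_finsetSum fun α _ => ?_
    have := (hα α).continuous_fderiv (by simp)
    exact Continuous.intervalIntegrable (by fun_prop) _ _
  simp only [hsum]
  rw [integral_finsetSum _ fun α _ => (main α).1,
    integral_finsetSum _ fun α _ => (main α).2.1, ← Finset.sum_neg_distrib]
  exact Finset.sum_congr rfl fun α _ => (main α).2.2
end

section
/- Let n ≥ 1 and T > 0. Let g = (g^{αβ}) be a C¹ field of symmetric positive definite n×n matrices on an open neighborhood of [−T,T] × ℝⁿ, let φ : ℝⁿ → ℝ be Lipschitz with −T < φ(x) < T for all x, let b⁰, b¹,…,bⁿ, c, f : [−T,T] × ℝⁿ → ℝ be continuous, and let v be C² on a neighborhood of [−T,T] × ℝⁿ, vanishing for |x| ≥ R for some R > 0, and satisfying ∂_t²v − Σ g^{αβ}∂_α∂_β v + b⁰∂_t v + Σ b^α∂_α v + c v = f on [−T,T] × ℝⁿ. Then for every t ∈ (−T, T], writing D_t = {x ∈ ℝⁿ : φ(x) < t}: ∫_{D_t} [(∂_t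 v)² + Σ g^{αβ}∂_α v ∂_β v + v²](t,x) dx = ∫_{D_t} [(∂_t v)²·(1 − Σ g^{αβ}∂_αφ∂_βφ) + Σ g^{αβ}(∂_α v + ∂_αφ·∂_t v)(∂_β v + ∂_βφ·∂_t v) + v²](φ(x),x) dx − ∫∫_{{(s,x) : φ(x) < s < t}} [2∂_s v·(b⁰∂_s v + Σ b^α∂_α v + c v) + 2Σ ∂_α(g^{αβ})·∂_s v ∂_β v − Σ (∂_s g^{αβ})·∂_α v ∂_β v − 2v∂_s v − 2f∂_s v] ds dx. -/
open MeasureTheory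

lemma aux_compact_shear {n : ℕ} {ψ : (Fin n → ℝ) → ℝ} (hψ : Continuous ψ)
    {F : ℝ × (Fin n → ℝ) → ℝ} (hFc : HasCompactSupport F) :
    HasCompactSupport (fun q : ℝ × (Fin n → ℝ) => F (ψ q.2 + q.1, q.2)) := by
  let e : (ℝ × (Fin n → ℝ)) ≃ₜ (ℝ × (Fin n → ℝ)) :=
    { toFun := fun q => (ψ q.2 + q.1, q.2)
      invFun := fun q => (-ψ q.2 + q.1, q.2)
      left_inv := fun q => by ext <;> simp
      right_inv := fun q => by ext <;> simp
      continuous_toFun := by fun_prop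
      continuous_invFun := by fun_prop }
  exact hFc.comp_homeomorph e

lemma aux_compact_slice {n : ℕ} {ψ : (Fin n → ℝ) → ℝ} (hψ : Continuous ψ)
    {F : ℝ × (Fin n → ℝ) → ℝ} (hFc : HasCompactSupport F) :
    HasCompactSupport (fun x : Fin n → ℝ => F (ψ x, x)) := by
  have hK : IsCompact (Prod.snd '' (tsupport F)) := IsCompact.image hFc continuous_snd
  refine HasCompactSupport.of_support_subset_isCompact hK ?_
  intro x hx
  exact ⟨(ψ x, x), subset_tsupport _ hx, rfl⟩

lemma aux_compact_line {n : ℕ} (x : Fin n → ℝ) 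
    {F : ℝ × (Fin n → ℝ) → ℝ} (hFc : HasCompactSupport F) :
    HasCompactSupport (fun s : ℝ => F (s, x)) := by
  have hK : IsCompact (Prod.fst '' (tsupport F)) := IsCompact.image hFc continuous_fst
  refine HasCompactSupport.of_support_subset_isCompact hK ?_
  intro s hx
  exact ⟨(s, x), subset_tsupport _ hx, rfl⟩

lemma aux_fubini {n : ℕ} {ψ : (Fin n → ℝ) → ℝ} (hψ : Continuous ψ)
    {F : ℝ × (Fin n → ℝ) → ℝ} (hF : Continuous F) (hFc : HasCompactSupport F) :
    ∫ p in {p : ℝ × (Fin n → ℝ) | ψ p.2 < p.1}, F p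
      = ∫ x, ∫ s in Set.Ioi (ψ x), F (s, x) := by
  have hS : MeasurableSet {p : ℝ × (Fin n → ℝ) | ψ p.2 < p.1} :=
    (isOpen_lt (by fun_prop) (by fun_prop)).measurableSet
  have hi : Integrable F := hF.integrable_of_hasCompactSupport hFc
  rw [← integral_indicator hS]
  rw [Measure.volume_eq_prod, integral_prod_symm _ (hi.indicator hS)]
  refine integral_congr_ae (Filter.Eventually.of_forall fun x => ?_)
  simp only
  rw [← integral_indicator measurableSet_Ioi]
  rfl

lemma aux_shift (F : ℝ → ℝ) (a : ℝ) :
    ∫ s in Set.Ioi a, F s = ∫ s in Set.Ioi 0, F (a + s) := by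
  rw [← integral_indicator measurableSet_Ioi, ← integral_indicator measurableSet_Ioi,
    ← integral_add_left_eq_self _ a]
  congr 1
  ext s
  simp [Set.indicator]

lemma aux_swap {n : ℕ} {ψ : (Fin n → ℝ) → ℝ} (hψ : Continuous ψ)
    {F : ℝ × (Fin n → ℝ) → ℝ} (hF : Continuous F) (hFc : HasCompactSupport F) :
    ∫ p in {p : ℝ × (Fin n → ℝ) | ψ p.2 < p.1}, F p
      = ∫ s in Set.Ioi (0 : ℝ), ∫ x, F (ψ x + s, x) := by
  rw [aux_fubini hψ hF hFc]
  simp_rw [fun x => aux_shift (fun s => F (s, x)) (ψ x)]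
  have hi : Integrable (fun q : ℝ × (Fin n → ℝ) => F (ψ q.2 + q.1, q.2)) :=
    Continuous.integrable_of_hasCompactSupport (by fun_prop) (aux_compact_shear hψ hFc)
  rw [Measure.volume_eq_prod] at hi
  have hi2 : Integrable (fun q : ℝ × (Fin n → ℝ) => F (ψ q.2 + q.1, q.2))
      ((volume.restrict (Set.Ioi 0)).prod volume) := by
    have := hi.integrableOn (s := Set.Ioi (0 : ℝ) ×ˢ Set.univ)
    rwa [IntegrableOn, ← Measure.prod_restrict, Measure.restrict_univ] at this
  exact (integral_integral_swap (f := fun s x => F (ψ x + s, x)) hi2).symm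

lemma aux_Dt_hasDerivAt {n : ℕ} {Z : ℝ × (Fin n → ℝ) → ℝ} (hZ : ContDiff ℝ 1 Z)
    (s : ℝ) (x : Fin n → ℝ) : HasDerivAt (fun s => Z (s, x)) (Dt Z (s, x)) s := by
  have h1 := (hZ.differentiable (by simp) (s, x)).hasFDerivAt
  have h2 : HasDerivAt (fun s : ℝ => (s, x)) ((1 : ℝ), (0 : Fin n → ℝ)) s :=
    (hasDerivAt_id s).prodMk (hasDerivAt_const s x)
  exact h1.comp_hasDerivAt s h2

lemma aux_line {n : ℕ} {Z : ℝ × (Fin n → ℝ) → ℝ} (hZ : ContDiff ℝ 1 Z)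
    (hZc : HasCompactSupport Z) (a : ℝ) (x : Fin n → ℝ) :
    ∫ s in Set.Ioi a, Dt Z (s, x) = - Z (a, x) := by
  have h := HasCompactSupport.integral_Ioi_deriv_eq (f := fun s => Z (s, x))
    (by fun_prop) (aux_compact_line x hZc) a
  rw [← h]
  congr 1
  ext s
  exact (aux_Dt_hasDerivAt hZ s x).deriv.symm

lemma aux_dir_cont {n : ℕ} {Z : ℝ × (Fin n → ℝ) → ℝ} (hZ : ContDiff ℝ 1 Z)
    (w : ℝ × (Fin n → ℝ)) : Continuous (fun p => fderiv ℝ Z p w) :=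
  (hZ.continuous_fderiv (by simp)).clm_apply continuous_const

lemma aux_dir_supp {n : ℕ} {Z : ℝ × (Fin n → ℝ) → ℝ} (hZ : HasCompactSupport Z)
    (w : ℝ × (Fin n → ℝ)) : HasCompactSupport (fun p => fderiv ℝ Z p w) :=
  hZ.fderiv_apply ℝ w

lemma aux_half_t {n : ℕ} {ψ : (Fin n → ℝ) → ℝ} (hψ : Continuous ψ)
    {Z : ℝ × (Fin n → ℝ) → ℝ} (hZ : ContDiff ℝ 1 Z) (hZc : HasCompactSupport Z) :
    ∫ p in {p : ℝ × (Fin n → ℝ) | ψ p.2 < p.1}, Dt Z p = - ∫ x, Z (ψ x, x) := by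
  rw [aux_fubini hψ (F := Dt Z) (aux_dir_cont hZ _) (aux_dir_supp hZc _)]
  simp_rw [aux_line hZ hZc]
  rw [integral_neg]

lemma aux_graph_zero {n : ℕ} {K : NNReal} {ψ : (Fin n → ℝ) → ℝ} (hψ : LipschitzWith K ψ)
    {Z : ℝ × (Fin n → ℝ) → ℝ} (hZ : ContDiff ℝ 1 Z) (hZc : HasCompactSupport Z) (α : Fin n) :
    ∫ x, (Dx α Z (ψ x, x) + fderiv ℝ ψ x (Pi.single α 1) * Dt Z (ψ x, x)) = 0 := by
  obtain ⟨C, hC⟩ := ContDiff.lipschitzWith_of_hasCompactSupport hZc hZ (by simp)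
  have hG : LipschitzWith (C * max K 1) (fun x => Z (ψ x, x)) :=
    hC.comp (hψ.prodMk LipschitzWith.id)
  have h := LipschitzWith.integral_lineDeriv_mul_eq (μ := volume) (LipschitzWith.const (α := Fin n → ℝ) (1 : ℝ)) hG
    (aux_compact_slice hψ.continuous hZc) (-(Pi.single α 1))
  simp only [neg_neg, mul_one] at h
  have h0 : ∀ x : Fin n → ℝ, lineDeriv ℝ (fun _ : Fin n → ℝ => (1 : ℝ)) x (-(Pi.single α 1)) = 0 := by
    intro x; simp [lineDeriv]
  simp only [h0, zero_mul, integral_zero] at h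
  rw [h]
  refine integral_congr_ae ?_
  filter_upwards [hψ.ae_differentiableAt (μ := volume)] with x hx
  have h1 := (hZ.differentiable (by simp) (ψ x, x)).hasFDerivAt
  have h2 : HasFDerivAt (fun x => (ψ x, x)) _ x := hx.hasFDerivAt.prodMk (hasFDerivAt_id x)
  have h3 := HasFDerivAt.comp (f := fun x => (ψ x, x)) x h1 h2
  have h4 := (h3.hasLineDerivAt (Pi.single α 1)).lineDeriv
  change lineDeriv ℝ (fun x => Z (ψ x, x)) x (Pi.single α 1) = _ at h4
  rw [h4]
  simp only [ContinuousLinearMap.comp_apply, ContinuousLinearMap.prod_apply, Dx, Dt,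
    ContinuousLinearMap.id_apply]
  rw [show (fderiv ℝ ψ x (Pi.single α 1), (Pi.single α 1 : Fin n → ℝ))
    = (0, Pi.single α 1) + (fderiv ℝ ψ x (Pi.single α 1)) • ((1 : ℝ), (0 : Fin n → ℝ)) by
      ext <;> simp, map_add, map_smul, smul_eq_mul]

lemma aux_bdd_int {n : ℕ} {K : NNReal} {ψ : (Fin n → ℝ) → ℝ} (hψ : LipschitzWith K ψ)
    {X : Type*} [MeasurableSpace X] {μ : Measure X} {r : X → (Fin n → ℝ)} (hr : Measurable r)
    {h : X → ℝ} (hh : Integrable h μ) (α : Fin n) :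
    Integrable (fun x => fderiv ℝ ψ (r x) (Pi.single α 1) * h x) μ := by
  refine hh.bdd_mul (c := K * ‖(Pi.single α 1 : Fin n → ℝ)‖) ?_ ?_
  · exact ((measurable_fderiv_apply_const ℝ ψ _).comp hr).aestronglyMeasurable
  · refine Filter.Eventually.of_forall fun x => ?_
    exact ((fderiv ℝ ψ (r x)).le_opNorm _).trans
      (mul_le_mul_of_nonneg_right (norm_fderiv_le_of_lipschitz ℝ hψ) (norm_nonneg _))

lemma aux_half_x {n : ℕ} {K : NNReal} {ψ : (Fin n → ℝ) → ℝ} (hψ : LipschitzWith K ψ)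
    {Z : ℝ × (Fin n → ℝ) → ℝ} (hZ : ContDiff ℝ 1 Z) (hZc : HasCompactSupport Z) (α : Fin n) :
    ∫ p in {p : ℝ × (Fin n → ℝ) | ψ p.2 < p.1}, Dx α Z p
      = ∫ x, fderiv ℝ ψ x (Pi.single α 1) * Z (ψ x, x) := by
  have hψc := hψ.continuous
  have hcx : Continuous (Dx α Z) := aux_dir_cont hZ _
  have hct : Continuous (Dt Z) := aux_dir_cont hZ _
  have hsx : HasCompactSupport (Dx α Z) := aux_dir_supp hZc _
  have hst : HasCompactSupport (Dt Z) := aux_dir_supp hZc _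
  rw [aux_swap hψc hcx hsx]
  have key : ∀ s : ℝ, ∫ x, Dx α Z (ψ x + s, x)
      = - ∫ x, fderiv ℝ ψ x (Pi.single α 1) * Dt Z (ψ x + s, x) := by
    intro s
    have hψs : LipschitzWith K (fun x => ψ x + s) := by
      intro x y; simpa using hψ x y
    have h := aux_graph_zero hψs hZ hZc α
    simp only [fderiv_add_const] at h
    have i1 : Integrable (fun x => Dx α Z (ψ x + s, x)) :=
      Continuous.integrable_of_hasCompactSupport (by fun_prop)
        (aux_compact_slice (ψ := fun x => ψ x + s) (by fun_prop) hsx)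
    have i2 : Integrable (fun x => Dt Z (ψ x + s, x)) :=
      Continuous.integrable_of_hasCompactSupport (by fun_prop)
        (aux_compact_slice (ψ := fun x => ψ x + s) (by fun_prop) hst)
    have i3 : Integrable (fun x => fderiv ℝ ψ x (Pi.single α 1) * Dt Z (ψ x + s, x)) :=
      aux_bdd_int hψ measurable_id i2 α
    rw [integral_add i1 i3] at h
    linarith
  simp_rw [key]
  rw [integral_neg]
  have hi : Integrable (fun q : ℝ × (Fin n → ℝ) => Dt Z (ψ q.2 + q.1, q.2)) :=
    Continuous.integrable_of_hasCompactSupport (by fun_prop) (aux_compact_shear hψc hst)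
  rw [Measure.volume_eq_prod] at hi
  have hi2 : Integrable (fun q : ℝ × (Fin n → ℝ) => Dt Z (ψ q.2 + q.1, q.2))
      ((volume.restrict (Set.Ioi 0)).prod volume) := by
    have := hi.integrableOn (s := Set.Ioi (0 : ℝ) ×ˢ Set.univ)
    rwa [IntegrableOn, ← Measure.prod_restrict, Measure.restrict_univ] at this
  have hi3 := aux_bdd_int hψ measurable_snd hi2 α
  rw [integral_integral_swap
    (f := fun s x => fderiv ℝ ψ x (Pi.single α 1) * Dt Z (ψ x + s, x)) hi3]
  rw [← integral_neg]
  congr 1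
  ext x
  rw [integral_const_mul, ← aux_shift (fun s => Dt Z (s, x)), aux_line hZ hZc]
  ring

lemma aux_region {n : ℕ} {φ : (Fin n → ℝ) → ℝ} (hφ : Continuous φ) (t : ℝ)
    {F : ℝ × (Fin n → ℝ) → ℝ} (hF : Integrable F) :
    ∫ p in {p : ℝ × (Fin n → ℝ) | φ p.2 < p.1 ∧ p.1 < t}, F p
      = (∫ p in {p : ℝ × (Fin n → ℝ) | min (φ p.2) t < p.1}, F p)
        - ∫ p in {p : ℝ × (Fin n → ℝ) | t < p.1}, F p := by
  have hm : MeasurableSet {p : ℝ × (Fin n → ℝ) | t < p.1} :=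
    (isOpen_lt (by fun_prop) (by fun_prop)).measurableSet
  have hu : {p : ℝ × (Fin n → ℝ) | min (φ p.2) t < p.1}
      = {p | φ p.2 < p.1 ∧ p.1 ≤ t} ∪ {p | t < p.1} := by
    ext p
    simp only [Set.mem_ofPred_eq, Set.mem_union, min_lt_iff]
    grind
  have hd : Disjoint {p : ℝ × (Fin n → ℝ) | φ p.2 < p.1 ∧ p.1 ≤ t} {p | t < p.1} := by
    rw [Set.disjoint_left]
    rintro p ⟨_, h⟩ h2
    exact absurd h2 (not_lt.2 h)
  rw [hu, setIntegral_union hd hm hF.integrableOn hF.integrableOn, add_sub_cancel_right]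
  refine setIntegral_congr_set ?_
  have hnull : volume {p : ℝ × (Fin n → ℝ) | p.1 = t} = 0 := by
    have : {p : ℝ × (Fin n → ℝ) | p.1 = t} = {t} ×ˢ Set.univ := by ext; simp
    rw [this, Measure.volume_eq_prod, Measure.prod_prod]; simp
  have hae : ∀ᵐ p : ℝ × (Fin n → ℝ), p.1 ≠ t := by
    rw [ae_iff]; simpa using hnull
  filter_upwards [hae] with p hp
  apply propext
  change (φ p.2 < p.1 ∧ p.1 < t) ↔ (φ p.2 < p.1 ∧ p.1 ≤ t)
  exact and_congr_right fun _ => ⟨le_of_lt, fun h => lt_of_le_of_ne h hp⟩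

lemma aux_slice_int {n : ℕ} {ψ : (Fin n → ℝ) → ℝ} (hψ : Continuous ψ)
    {Z : ℝ × (Fin n → ℝ) → ℝ} (hZ : Continuous Z) (hZc : HasCompactSupport Z) :
    Integrable (fun x => Z (ψ x, x)) :=
  Continuous.integrable_of_hasCompactSupport (by fun_prop) (aux_compact_slice hψ hZc)

lemma aux_reg_t {n : ℕ} {φ : (Fin n → ℝ) → ℝ} (hφ : Continuous φ) (t : ℝ)
    {Z : ℝ × (Fin n → ℝ) → ℝ} (hZ : ContDiff ℝ 1 Z) (hZc : HasCompactSupport Z) :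
    ∫ p in {p : ℝ × (Fin n → ℝ) | φ p.2 < p.1 ∧ p.1 < t}, Dt Z p
      = (∫ x in {x | φ x < t}, Z (t, x)) - ∫ x in {x | φ x < t}, Z (φ x, x) := by
  have hct : Continuous (Dt Z) := aux_dir_cont hZ _
  have hst : HasCompactSupport (Dt Z) := aux_dir_supp hZc _
  have hD : MeasurableSet {x | φ x < t} := (isOpen_lt hφ continuous_const).measurableSet
  rw [aux_region hφ t (hct.integrable_of_hasCompactSupport hst),
    aux_half_t (ψ := fun x => min (φ x) t) (by fun_prop) hZ hZc,
    aux_half_t (ψ := fun _ => t) (by fun_prop) hZ hZc]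
  have i1 := aux_slice_int (ψ := fun x => min (φ x) t) (by fun_prop) hZ.continuous hZc
  have i2 := aux_slice_int (ψ := fun _ => t) (by fun_prop) hZ.continuous hZc
  have i3 := aux_slice_int (ψ := φ) (by fun_prop) hZ.continuous hZc
  rw [← integral_sub i2.integrableOn i3.integrableOn, neg_sub_neg, ← integral_sub i2 i1,
    ← integral_indicator hD]
  congr 1
  ext x
  by_cases hx : φ x < t
  · rw [Set.indicator_of_mem (by exact hx), min_eq_left hx.le]
  · rw [Set.indicator_of_notMem (by exact hx), min_eq_right (not_lt.1 hx), sub_self]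

lemma aux_reg_x {n : ℕ} {K : NNReal} {φ : (Fin n → ℝ) → ℝ} (hφ : LipschitzWith K φ) (t : ℝ)
    {Z : ℝ × (Fin n → ℝ) → ℝ} (hZ : ContDiff ℝ 1 Z) (hZc : HasCompactSupport Z) (α : Fin n) :
    ∫ p in {p : ℝ × (Fin n → ℝ) | φ p.2 < p.1 ∧ p.1 < t}, Dx α Z p
      = ∫ x in {x | φ x < t}, fderiv ℝ φ x (Pi.single α 1) * Z (φ x, x) := by
  have hct : Continuous (Dx α Z) := aux_dir_cont hZ _
  have hst : HasCompactSupport (Dx α Z) := aux_dir_supp hZc _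
  have hD : MeasurableSet {x | φ x < t} :=
    (isOpen_lt hφ.continuous continuous_const).measurableSet
  rw [aux_region hφ.continuous t (hct.integrable_of_hasCompactSupport hst),
    aux_half_x (ψ := fun x => min (φ x) t) (hφ.min_const t) hZ hZc,
    aux_half_x (ψ := fun _ => t) (LipschitzWith.const t) hZ hZc]
  rw [← integral_indicator hD]
  simp only [fderiv_fun_const, Pi.zero_apply, zero_apply, zero_mul,
    integral_zero, sub_zero]
  congr 1
  ext x
  by_cases hx : φ x < t
  · rw [Set.indicator_of_mem (by exact hx), min_eq_left hx.le]
    congr 2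
    apply Filter.EventuallyEq.fderiv_eq
    filter_upwards [(isOpen_lt hφ.continuous continuous_const).mem_nhds hx] with y hy
    exact min_eq_left (le_of_lt hy)
  · rw [Set.indicator_of_notMem (by exact hx)]
    have : IsLocalMax (fun x => min (φ x) t) x := by
      refine Filter.Eventually.of_forall fun y => ?_
      change min (φ y) t ≤ min (φ x) t
      rw [min_eq_right (not_lt.1 hx)]
      exact min_le_right _ _
    rw [this.fderiv_eq_zero]
    simp

lemma aux_cutoff {n : ℕ} {T R : ℝ} {U : Set (ℝ × (Fin n → ℝ))} (hU : IsOpen U)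
    (hUsub : Set.Icc (-T) T ×ˢ (Set.univ : Set (Fin n → ℝ)) ⊆ U)
    {e : ℝ × (Fin n → ℝ) → ℝ} (he : ContDiffOn ℝ 1 e U)
    (h0 : ∀ p : ℝ × (Fin n → ℝ), R < ‖p.2‖ → e p = 0) :
    ∃ Z : ℝ × (Fin n → ℝ) → ℝ, ContDiff ℝ 1 Z ∧ HasCompactSupport Z ∧
      ∀ p : ℝ × (Fin n → ℝ), p.1 ∈ Set.Icc (-T) T → Z =ᶠ[nhds p] e := by
  have hK : IsCompact (Set.Icc (-T) T ×ˢ Metric.closedBall (0 : Fin n → ℝ) R) :=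
    isCompact_Icc.prod (isCompact_closedBall _ _)
  have hKU : Set.Icc (-T) T ×ˢ Metric.closedBall (0 : Fin n → ℝ) R ⊆ U :=
    (Set.prod_mono_right (Set.subset_univ _)).trans hUsub
  obtain ⟨L, hL, hKL, hLU⟩ := exists_compact_between hK hU hKU
  obtain ⟨χ, h1, hz, -⟩ := exists_contMDiffMap_one_nhds_of_subset_interior (n := 1)
    (modelWithCornersSelf ℝ (ℝ × (Fin n → ℝ))) hK.isClosed hKL
  have hχ : ContDiff ℝ 1 χ := χ.contMDiff.contDiff
  refine ⟨fun p => χ p * e p, ?_, ?_, ?_⟩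
  · rw [contDiff_iff_contDiffAt]
    intro p
    by_cases hp : p ∈ U
    · exact hχ.contDiffAt.mul (he.contDiffAt (hU.mem_nhds hp))
    · have hpL : p ∈ Lᶜ := fun h => hp (hLU h)
      refine (contDiffAt_const (c := (0 : ℝ))).congr_of_eventuallyEq ?_
      filter_upwards [hL.isClosed.isOpen_compl.mem_nhds hpL] with q hq
      rw [hz q hq, zero_mul]
  · refine HasCompactSupport.of_support_subset_isCompact hL ?_
    intro p hp
    by_contra h
    exact hp (by simp [hz p h])
  · intro p hp
    by_cases hR : ‖p.2‖ ≤ R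
    · have hpK : p ∈ Set.Icc (-T) T ×ˢ Metric.closedBall (0 : Fin n → ℝ) R :=
        ⟨hp, by simpa using hR⟩
      filter_upwards [h1.filter_mono (nhds_le_nhdsSet hpK)] with q hq
      simp [hq]
    · have ho : IsOpen {q : ℝ × (Fin n → ℝ) | R < ‖q.2‖} := isOpen_lt (by fun_prop) (by fun_prop)
      filter_upwards [ho.mem_nhds (not_le.1 hR)] with q hq
      simp [h0 q hq]


lemma aux_pointwise {n : ℕ} (g : Fin n → Fin n → ℝ × (Fin n → ℝ) → ℝ)
    (v : ℝ × (Fin n → ℝ) → ℝ) (p : ℝ × (Fin n → ℝ))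
    (hg : ∀ α β, DifferentiableAt ℝ (g α β) p)
    (hgsymm : ∀ α β p, g α β p = g β α p)
    (hv : ContDiffAt ℝ 2 v p) :
    Dt (fun p => (Dt v p) ^ 2 + (∑ α, ∑ β, g α β p * Dx α v p * Dx β v p) + (v p) ^ 2) p
      - ∑ α, Dx α (fun p => 2 * Dt v p * ∑ β, g α β p * Dx β v p) p
      = 2 * Dt v p * (Dt (Dt v) p - ∑ α, ∑ β, g α β p * Dx α (Dx β v) p)
        + (∑ α, ∑ β, Dt (g α β) p * Dx α v p * Dx β v p)
        - 2 * (∑ α, ∑ β, Dx α (g α β) p * Dt v p * Dx β v p) + 2 * v p * Dt v p := by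
  have hv1 : DifferentiableAt ℝ v p := hv.differentiableAt (by simp)
  have hvf : DifferentiableAt ℝ (fderiv ℝ v) p :=
    (hv.fderiv_right (m := 1) (by norm_num)).differentiableAt (by simp)
  have hsymm : IsSymmSndFDerivAt ℝ v p := hv.isSymmSndFDerivAt (by simp)
  have hA : DifferentiableAt ℝ (Dt v) p := hvf.clm_apply (differentiableAt_const _)
  have hB : ∀ α, DifferentiableAt ℝ (Dx α v) p := fun α => hvf.clm_apply (differentiableAt_const _)
  have hcomm : ∀ α, Dt (Dx α v) p = Dx α (Dt v) p := by
    intro α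
    have e1 : ∀ w z : ℝ × (Fin n → ℝ),
        fderiv ℝ (fun q => fderiv ℝ v q w) p z = fderiv ℝ (fderiv ℝ v) p z w := by
      intro w z
      rw [fderiv_clm_apply hvf (differentiableAt_const _)]
      simp
    change fderiv ℝ (fun q => fderiv ℝ v q _) p _ = fderiv ℝ (fun q => fderiv ℝ v q _) p _
    rw [e1, e1]
    exact hsymm _ _
  have hE : Dt (fun p => (Dt v p) ^ 2 + (∑ α, ∑ β, g α β p * Dx α v p * Dx β v p) + (v p) ^ 2) p
      = 2 * Dt v p * Dt (Dt v) p
        + (∑ α, ∑ β, (Dt (g α β) p * Dx α v p * Dx β v p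
          + g α β p * Dt (Dx α v) p * Dx β v p + g α β p * Dx α v p * Dt (Dx β v) p))
        + 2 * v p * Dt v p := by
    have h1 := ((hA.hasFDerivAt.pow 2).add (HasFDerivAt.fun_sum (u := Finset.univ) (fun α _ =>
      HasFDerivAt.fun_sum (u := Finset.univ) (fun β _ =>
        ((hg α β).hasFDerivAt.mul (hB α).hasFDerivAt).mul (hB β).hasFDerivAt)))).add
        (hv1.hasFDerivAt.pow 2)
    have h2 := congrArg (fun L => L ((1 : ℝ), (0 : Fin n → ℝ))) h1.fderiv
    refine Eq.trans h2 ?_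
    simp only [add_apply, sum_apply, smul_apply, smul_eq_mul, Dt]
    congr 1
    · congr 1
      · simp
      · refine Finset.sum_congr rfl fun α _ => Finset.sum_congr rfl fun β _ => ?_
        simp only [Pi.mul_apply]
        ring
    · simp
  have hX : ∀ α, Dx α (fun p => 2 * Dt v p * ∑ β, g α β p * Dx β v p) p
      = ∑ β, (2 * Dx α (Dt v) p * (g α β p * Dx β v p)
        + 2 * Dt v p * (Dx α (g α β) p * Dx β v p + g α β p * Dx α (Dx β v) p)) := by
    intro α
    have h1 := (hA.hasFDerivAt.const_mul 2).mul (HasFDerivAt.fun_sum (u := Finset.univ)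
      (fun β _ => (hg α β).hasFDerivAt.mul (hB β).hasFDerivAt))
    have h2 := congrArg (fun L => L ((0 : ℝ), (Pi.single α 1 : Fin n → ℝ))) h1.fderiv
    refine Eq.trans h2 ?_
    simp only [add_apply, sum_apply, smul_apply, smul_eq_mul, Dx, Pi.mul_apply]
    rw [Finset.mul_sum, Finset.sum_mul, ← Finset.sum_add_distrib]
    exact Finset.sum_congr rfl fun β _ => by ring
  rw [hE]
  simp_rw [hX, hcomm]
  have hs : ∑ α, ∑ β, g α β p * Dx α (Dt v) p * Dx β v p
      = ∑ α, ∑ β, g α β p * Dx α v p * Dx β (Dt v) p := by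
    rw [Finset.sum_comm]
    refine Finset.sum_congr rfl fun α _ => Finset.sum_congr rfl fun β _ => ?_
    rw [hgsymm β α]; ring
  have c1 : ∑ α, ∑ β, (Dt (g α β) p * Dx α v p * Dx β v p
          + g α β p * Dx α (Dt v) p * Dx β v p + g α β p * Dx α v p * Dx β (Dt v) p)
      = (∑ α, ∑ β, Dt (g α β) p * Dx α v p * Dx β v p)
        + 2 * ∑ α, ∑ β, g α β p * Dx α (Dt v) p * Dx β v p := by
    simp only [Finset.sum_add_distrib]
    rw [← hs]; ring
  have c2 : ∑ α, ∑ β, (2 * Dx α (Dt v) p * (g α β p * Dx β v p)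
        + 2 * Dt v p * (Dx α (g α β) p * Dx β v p + g α β p * Dx α (Dx β v) p))
      = 2 * (∑ α, ∑ β, g α β p * Dx α (Dt v) p * Dx β v p)
        + 2 * (∑ α, ∑ β, Dx α (g α β) p * Dt v p * Dx β v p)
        + 2 * Dt v p * ∑ α, ∑ β, g α β p * Dx α (Dx β v) p := by
    simp only [Finset.mul_sum, ← Finset.sum_add_distrib]
    refine Finset.sum_congr rfl fun α _ => Finset.sum_congr rfl fun β _ => ?_
    ring
  rw [c1, c2]
  ring

lemma aux_graph_alg {n : ℕ} (g : Fin n → Fin n → ℝ) (hg : ∀ α β, g α β = g β α)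
    (a w : ℝ) (B F : Fin n → ℝ) :
    a ^ 2 * (1 - ∑ α, ∑ β, g α β * F α * F β)
      + (∑ α, ∑ β, g α β * (B α + F α * a) * (B β + F β * a)) + w ^ 2
    = (a ^ 2 + (∑ α, ∑ β, g α β * B α * B β) + w ^ 2)
      + ∑ α, F α * (2 * a * ∑ β, g α β * B β) := by
  have hs : ∑ α, ∑ β, g α β * B α * F β = ∑ α, ∑ β, g α β * F α * B β := by
    rw [Finset.sum_comm]
    refine Finset.sum_congr rfl fun α _ => Finset.sum_congr rfl fun β _ => ?_
    rw [hg β α]; ring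
  have h1 : ∑ α, ∑ β, g α β * (B α + F α * a) * (B β + F β * a)
      = (∑ α, ∑ β, g α β * B α * B β) + a * (∑ α, ∑ β, g α β * B α * F β)
        + a * (∑ α, ∑ β, g α β * F α * B β) + a ^ 2 * (∑ α, ∑ β, g α β * F α * F β) := by
    simp only [Finset.mul_sum, ← Finset.sum_add_distrib]
    refine Finset.sum_congr rfl fun α _ => Finset.sum_congr rfl fun β _ => ?_
    ring
  have h2 : ∑ α, F α * (2 * a * ∑ β, g α β * B β)
      = 2 * a * ∑ α, ∑ β, g α β * F α * B β := by
    simp only [Finset.mul_sum]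
    refine Finset.sum_congr rfl fun α _ => Finset.sum_congr rfl fun β _ => ?_
    ring
  rw [h1, h2, hs]
  ring

/-- Energy balance identity between the Lipschitz graph hypersurface
`Σ = {(φ(x),x)}` and a later time slice `{t} × D_t`, `D_t = {x : φ(x) < t}`, obtained
by integrating the energy density identity over the future region
`{(s,x) : φ(x) < s < t}`. -/
theorem stmt_9 (n : ℕ) (hn : 1 ≤ n) (T : ℝ) (hT : 0 < T)
    (U : Set (ℝ × (Fin n → ℝ))) (hU : IsOpen U)
    (hUsub : Set.Icc (-T) T ×ˢ (Set.univ : Set (Fin n → ℝ)) ⊆ U)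
    (g : Fin n → Fin n → ℝ × (Fin n → ℝ) → ℝ)
    (hg : ∀ α β, ContDiffOn ℝ 1 (g α β) U)
    (hgsymm : ∀ α β p, g α β p = g β α p)
    (hgpos : ∀ p ∈ U, ∀ ξ : Fin n → ℝ, ξ ≠ 0 → 0 < ∑ α, ∑ β, g α β p * ξ α * ξ β)
    (φ : (Fin n → ℝ) → ℝ) (hφ : ∃ K : NNReal, LipschitzWith K φ)
    (hφT : ∀ x, -T < φ x ∧ φ x < T)
    (b0 : ℝ × (Fin n → ℝ) → ℝ) (b : Fin n → ℝ × (Fin n → ℝ) → ℝ)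
    (c f : ℝ × (Fin n → ℝ) → ℝ)
    (hb0 : ContinuousOn b0 (Set.Icc (-T) T ×ˢ (Set.univ : Set (Fin n → ℝ))))
    (hb : ∀ α, ContinuousOn (b α) (Set.Icc (-T) T ×ˢ (Set.univ : Set (Fin n → ℝ))))
    (hc : ContinuousOn c (Set.Icc (-T) T ×ˢ (Set.univ : Set (Fin n → ℝ))))
    (hf : ContinuousOn f (Set.Icc (-T) T ×ˢ (Set.univ : Set (Fin n → ℝ))))
    (v : ℝ × (Fin n → ℝ) → ℝ) (hv : ContDiffOn ℝ 2 v U)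
    (hsupp : ∃ R : ℝ, 0 < R ∧ ∀ (t : ℝ) (x : Fin n → ℝ), R ≤ ‖x‖ → v (t, x) = 0)
    (heq : ∀ p ∈ Set.Icc (-T) T ×ˢ (Set.univ : Set (Fin n → ℝ)),
      Dt (Dt v) p - (∑ α, ∑ β, g α β p * Dx α (Dx β v) p)
        + b0 p * Dt v p + (∑ α, b α p * Dx α v p) + c p * v p = f p) :
    ∀ t : ℝ, -T < t → t ≤ T →
    (∫ x in {x : Fin n → ℝ | φ x < t},
        ((Dt v (t, x)) ^ 2
          + (∑ α, ∑ β, g α β (t, x) * Dx α v (t, x) * Dx β v (t, x))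
          + (v (t, x)) ^ 2))
      = (∫ x in {x : Fin n → ℝ | φ x < t},
          ((Dt v (φ x, x)) ^ 2 *
              (1 - ∑ α, ∑ β, g α β (φ x, x) * fderiv ℝ φ x (Pi.single α 1)
                * fderiv ℝ φ x (Pi.single β 1))
            + (∑ α, ∑ β, g α β (φ x, x)
                * (Dx α v (φ x, x) + fderiv ℝ φ x (Pi.single α 1) * Dt v (φ x, x))
                * (Dx β v (φ x, x) + fderiv ℝ φ x (Pi.single β 1) * Dt v (φ x, x)))
            + (v (φ x, x)) ^ 2))
        - ∫ p in {p : ℝ × (Fin n → ℝ) | φ p.2 < p.1 ∧ p.1 < t},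
            (2 * Dt v p * (b0 p * Dt v p + (∑ α, b α p * Dx α v p) + c p * v p)
              + 2 * (∑ α, ∑ β, Dx α (g α β) p * Dt v p * Dx β v p)
              - (∑ α, ∑ β, Dt (g α β) p * Dx α v p * Dx β v p)
              - 2 * v p * Dt v p - 2 * f p * Dt v p) := by
  classical
  intro t ht1 ht2
  obtain ⟨K, hφ⟩ := hφ
  obtain ⟨R, -, hR⟩ := hsupp
  have hφc := hφ.continuous
  have hD : MeasurableSet {x | φ x < t} := (isOpen_lt hφc continuous_const).measurableSet
  have hS : MeasurableSet {p : ℝ × (Fin n → ℝ) | φ p.2 < p.1 ∧ p.1 < t} :=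
    (measurableSet_lt (f := fun p : ℝ × (Fin n → ℝ) => φ p.2)
      (g := fun p : ℝ × (Fin n → ℝ) => p.1)
      (by fun_prop) (by fun_prop)).inter
      (measurableSet_lt (f := fun p : ℝ × (Fin n → ℝ) => p.1) (g := fun _ => t)
        (by fun_prop) (by fun_prop))
  -- vanishing outside the ball of radius `R`
  have hf0 : ∀ p : ℝ × (Fin n → ℝ), R < ‖p.2‖ → fderiv ℝ v p = 0 := by
    intro p hp
    have ho : IsOpen {q : ℝ × (Fin n → ℝ) | R < ‖q.2‖} := isOpen_lt (by fun_prop) (by fun_prop)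
    have : v =ᶠ[nhds p] fun _ => 0 := by
      filter_upwards [ho.mem_nhds hp] with q hq
      exact hR q.1 q.2 (le_of_lt hq)
    rw [this.fderiv_eq]
    simp
  -- regularity
  have hvf : ContDiffOn ℝ 1 (fderiv ℝ v) U := hv.fderiv_of_isOpen hU (by norm_num)
  have hA : ContDiffOn ℝ 1 (Dt v) U := hvf.clm_apply contDiffOn_const
  have hB : ∀ α, ContDiffOn ℝ 1 (Dx α v) U := fun α => hvf.clm_apply contDiffOn_const
  have hv1 : ContDiffOn ℝ 1 v U := hv.of_le (by norm_num)
  obtain ⟨Z, hZ, hZc, hZe⟩ := aux_cutoff (R := R) hU hUsub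
    (e := fun p => (Dt v p) ^ 2 + (∑ α, ∑ β, g α β p * Dx α v p * Dx β v p) + (v p) ^ 2)
    (((hA.pow 2).add (ContDiffOn.sum fun α _ => ContDiffOn.sum fun β _ =>
      ((hg α β).mul (hB α)).mul (hB β))).add (hv1.pow 2))
    (fun p hp => by
      have h1 : v p = 0 := hR p.1 p.2 hp.le
      simp [Dt, Dx, hf0 p hp, h1])
  have hX := fun α => aux_cutoff (R := R) hU hUsub
    (e := fun p => 2 * Dt v p * ∑ β, g α β p * Dx β v p)
    ((contDiffOn_const.mul hA).mul (ContDiffOn.sum fun β _ => (hg α β).mul (hB β)))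
    (fun p hp => by simp [Dt, hf0 p hp])
  choose X hX hXc hXe using hX
  -- the left-hand side
  have eL : (∫ x in {x : Fin n → ℝ | φ x < t},
        ((Dt v (t, x)) ^ 2
          + (∑ α, ∑ β, g α β (t, x) * Dx α v (t, x) * Dx β v (t, x))
          + (v (t, x)) ^ 2)) = ∫ x in {x : Fin n → ℝ | φ x < t}, Z (t, x) := by
    refine setIntegral_congr_fun hD fun x _ => ?_
    exact (hZe (t, x) ⟨ht1.le, ht2⟩).eq_of_nhds.symm
  -- the integral over the graph
  have eG : (∫ x in {x : Fin n → ℝ | φ x < t},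
          ((Dt v (φ x, x)) ^ 2 *
              (1 - ∑ α, ∑ β, g α β (φ x, x) * fderiv ℝ φ x (Pi.single α 1)
                * fderiv ℝ φ x (Pi.single β 1))
            + (∑ α, ∑ β, g α β (φ x, x)
                * (Dx α v (φ x, x) + fderiv ℝ φ x (Pi.single α 1) * Dt v (φ x, x))
                * (Dx β v (φ x, x) + fderiv ℝ φ x (Pi.single β 1) * Dt v (φ x, x)))
            + (v (φ x, x)) ^ 2))
      = (∫ x in {x : Fin n → ℝ | φ x < t}, Z (φ x, x))
        + ∑ α, ∫ x in {x : Fin n → ℝ | φ x < t},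
            fderiv ℝ φ x (Pi.single α 1) * X α (φ x, x) := by
    have iX : ∀ α, Integrable (fun x => fderiv ℝ φ x (Pi.single α 1) * X α (φ x, x)) :=
      fun α => aux_bdd_int hφ measurable_id (aux_slice_int hφc (hX α).continuous (hXc α)) α
    rw [← integral_finsetSum _ (fun α _ => (iX α).integrableOn),
      ← integral_add (aux_slice_int hφc hZ.continuous hZc).integrableOn
        (integrable_finsetSum _ fun α _ => (iX α).integrableOn)]
    refine setIntegral_congr_fun hD fun x _ => ?_
    have hmem : φ x ∈ Set.Icc (-T) T := ⟨(hφT x).1.le, (hφT x).2.le⟩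
    have z1 := (hZe (φ x, x) hmem).eq_of_nhds
    have z2 := fun α => (hXe α (φ x, x) hmem).eq_of_nhds
    simp only [z1, z2]
    exact aux_graph_alg _ (fun α β => hgsymm α β _) _ _ _ _
  -- the integral over the region
  have eS : (∫ p in {p : ℝ × (Fin n → ℝ) | φ p.2 < p.1 ∧ p.1 < t},
            (2 * Dt v p * (b0 p * Dt v p + (∑ α, b α p * Dx α v p) + c p * v p)
              + 2 * (∑ α, ∑ β, Dx α (g α β) p * Dt v p * Dx β v p)
              - (∑ α, ∑ β, Dt (g α β) p * Dx α v p * Dx β v p)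
              - 2 * v p * Dt v p - 2 * f p * Dt v p))
      = (∑ α, ∫ p in {p : ℝ × (Fin n → ℝ) | φ p.2 < p.1 ∧ p.1 < t}, Dx α (X α) p)
        - ∫ p in {p : ℝ × (Fin n → ℝ) | φ p.2 < p.1 ∧ p.1 < t}, Dt Z p := by
    have iX : ∀ α, Integrable (Dx α (X α)) := fun α =>
      Continuous.integrable_of_hasCompactSupport (aux_dir_cont (hX α) _) (aux_dir_supp (hXc α) _)
    have iZ : Integrable (Dt Z) :=
      Continuous.integrable_of_hasCompactSupport (aux_dir_cont hZ _) (aux_dir_supp hZc _)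
    rw [← integral_finsetSum _ (fun α _ => (iX α).integrableOn),
      ← integral_sub (integrable_finsetSum _ fun α _ => (iX α).integrableOn) iZ.integrableOn]
    refine setIntegral_congr_fun hS fun p hp => ?_
    have hmem : p.1 ∈ Set.Icc (-T) T :=
      ⟨((hφT p.2).1.trans hp.1).le, hp.2.le.trans ht2⟩
    have hpU : p ∈ U := hUsub ⟨hmem, trivial⟩
    have hn := hU.mem_nhds hpU
    have z1 : Dt Z p = Dt (fun p => (Dt v p) ^ 2
        + (∑ α, ∑ β, g α β p * Dx α v p * Dx β v p) + (v p) ^ 2) p := by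
      unfold Dt
      exact congrArg (fun L : (ℝ × (Fin n → ℝ)) →L[ℝ] ℝ => L ((1 : ℝ), (0 : Fin n → ℝ)))
        (hZe p hmem).fderiv_eq
    have z2 : ∀ α, Dx α (X α) p = Dx α (fun p => 2 * Dt v p * ∑ β, g α β p * Dx β v p) p := by
      intro α
      exact congrArg (fun L : (ℝ × (Fin n → ℝ)) →L[ℝ] ℝ =>
        L ((0 : ℝ), (Pi.single α 1 : Fin n → ℝ))) (hXe α p hmem).fderiv_eq
    have key := aux_pointwise g v p
      (fun α β => ((hg α β).contDiffAt hn).differentiableAt (by simp)) hgsymm (hv.contDiffAt hn)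
    have he := heq p ⟨hmem, trivial⟩
    simp only [z1, z2]
    linear_combination key + 2 * Dt v p * he
  rw [eL, eG, eS, aux_reg_t hφc t hZ hZc]
  simp_rw [fun α => aux_reg_x hφ t (hX α) (hXc α) α]
  ring
end
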